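/- arXiv:1911.06170 — 5 statements merged into one kernel-verified Lean document; each statement's English description precedes it below -/
import Mathlib

section
/- Let α > 3 be a quadratic unit, i.e. α = (b+√(b²−4))/2 with an integer b ≥ 4 (conjugate α₂ = 1/α > 0) or α = (b+√(b²+4))/2 with an integer b ≥ 3 (conjugate α₂ = −1/α < 0). Then the infimum of limsup_{n→∞} ‖ξ·α^n‖ over all ξ ∈ ℝ ∖ ℚ(α) equals 1/(1+α) when α₂ > 0, and equals b/(1+α²) when α₂ < 0. -/
/-- Distance from `x` to the nearest integer. -/
noncomputable def distNearestInt (x : ℝ) : ℝ := |x - round x|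

/-- `limsup_{n→∞} ‖ξ·α^n‖`. -/
noncomputable def limsupDist (α ξ : ℝ) : ℝ :=
  Filter.limsup (fun n : ℕ => distNearestInt (ξ * α ^ n)) Filter.atTop

/-!
Let `u n` be the nearest integer to `ξ * α ^ n` and `ε n` the error. The digits
`a n = u (n + 2) - b * u (n + 1) - s * u n`, with `s = -N(α)`, determine `ε` through expansions into
the future and the past of `a`, and if they are eventually periodic then `ξ ∈ ℚ(α)`.

For norm `1`, errors eventually bounded by some `c < 1 / (1 + α)` make `a n = t (n + 1) - t n` for a
word `t` in two letters whose two-sided expansions differ by less than `1` at every cut. Such a word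
satisfies Markoff's condition with mirrored factors of bounded length. As in Markoff's theorem, one
of its letters is eventually isolated, and contracting the blocks at that letter decreases the
bound, so `t` is eventually periodic. The value `1 / (1 + α)` is attained by the number whose word
`t` has its letters `true` at the powers of two.

For norm `-1`, errors below `b / (1 + α ^ 2)` force every other digit to vanish eventually, which
reduces to `α ^ 2`, a number of norm `1`; conversely `b` times an extremal number for `α ^ 2` is
extremal for `α`.
-/

open Filter IntermediateField

/-- A sequence satisfying `t (n + p) = t n` for some period `p > 0` and all large `n`. -/
def EventuallyPeriodic {X : Type*} (t : ℕ → X) : Prop :=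
  ∃ p > 0, ∀ᶠ n in atTop, t (n + p) = t n

namespace EventuallyPeriodic

variable {X Y : Type*} {t : ℕ → X}

theorem of_shift (m : ℕ) (h : EventuallyPeriodic fun n => t (m + n)) : EventuallyPeriodic t := by
  obtain ⟨p, hp, h⟩ := h
  obtain ⟨N, hN⟩ := eventually_atTop.1 h
  refine ⟨p, hp, eventually_atTop.2 ⟨m + N, fun n hn => ?_⟩⟩
  have hshift : t (m + (n - m + p)) = t (m + (n - m)) := hN (n - m) (by omega)
  rwa [show m + (n - m + p) = n + p by omega, show m + (n - m) = n by omega] at hshift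

theorem map_adjacent (f : X → X → Y) (h : EventuallyPeriodic t) :
    EventuallyPeriodic fun n => f (t n) (t (n + 1)) := by
  obtain ⟨p, hp, h⟩ := h
  refine ⟨p, hp, ?_⟩
  filter_upwards [h, (tendsto_add_atTop_nat 1).eventually h] with n hn hn'
  rw [hn, ← hn', add_right_comm]

theorem of_even_eq_of_odd {x : X} (heven : ∀ k, t (2 * k) = x)
    (hodd : EventuallyPeriodic fun k => t (2 * k + 1)) : EventuallyPeriodic t := by
  obtain ⟨p, hp, h⟩ := hodd
  obtain ⟨N, hN⟩ := eventually_atTop.1 h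
  refine ⟨2 * p, by omega, eventually_atTop.2 ⟨2 * N, fun n hn => ?_⟩⟩
  rcases Nat.even_or_odd' n with ⟨k, rfl | rfl⟩
  · rw [← mul_add, heven, heven]
  · have hstep : t (2 * (k + p) + 1) = t (2 * k + 1) := hN k (by omega)
    rw [← hstep, mul_add, add_right_comm]

end EventuallyPeriodic

theorem exists_first_ne {X : Type*} {f g : ℕ → X} {k : ℕ} (h : f k ≠ g k) :
    ∃ l ≤ k, f l ≠ g l ∧ ∀ j < l, f j = g j := by
  classical
  have hex : ∃ l, f l ≠ g l := ⟨k, h⟩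
  exact ⟨Nat.find hex, Nat.find_le h, Nat.find_spec hex,
    fun j hj => not_not.1 (Nat.find_min hex hj)⟩

/-! ### Markoff words -/

/-- Markoff's condition at the cut `t n | t (n + 1) = x | y`: around it the word reads
`y w̃ x | y w x`, where `w` has length `i` and `w̃` is its reversal. The truncated subtractions are
harmless as long as `i < n`. -/
structure IsMarkoffCut (t : ℕ → Bool) (n i : ℕ) : Prop where
  mirror : ∀ j < i, t (n + 2 + j) = t (n - 1 - j)
  right : t (n + 2 + i) = t n
  left : t (n - 1 - i) = t (n + 1)

/-- All late cuts between distinct letters satisfy Markoff's condition with mirrored factors of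
length less than `K`. -/
def IsBoundedMarkoff (K : ℕ) (t : ℕ → Bool) : Prop :=
  ∀ᶠ n in atTop, t n ≠ t (n + 1) → ∃ i < K, IsMarkoffCut t n i

/-- The factor of `t` at positions `m, …, m + d + 1` is `x x y x … x y y`, where `y` is the letter
other than `x`: two doubled letters joined by an alternating word. -/
structure IsAlternatingBridge (t : ℕ → Bool) (m d : ℕ) (x : Bool) : Prop where
  first : t m = x
  second : t (m + 1) = x
  penultimate : t (m + d) = !x
  last : t (m + d + 1) = !x
  alternating : ∀ k, m < k → k < m + d → t (k + 1) = !t k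

theorem exists_isAlternatingBridge {t : ℕ → Bool} (d : ℕ) {m : ℕ} {x : Bool} (h₀ : t m = x)
    (h₁ : t (m + 1) = x) (h₂ : t (m + d) = !x) (h₃ : t (m + d + 1) = !x) :
    ∃ m' ≥ m, ∃ d', IsAlternatingBridge t m' d' x := by
  induction d using Nat.strong_induction_on generalizing m with
  | _ d ih =>
    by_cases halt : ∀ k, m < k → k < m + d → t (k + 1) = !t k
    · exact ⟨m, le_rfl, d, h₀, h₁, h₂, h₃, halt⟩
    push Not at halt
    obtain ⟨k, hmk, hkd, hk⟩ := halt
    have hk' : t (k + 1) = t k := by simpa using hk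
    by_cases hx : t k = x
    · obtain ⟨m', hm', hbridge⟩ := ih (m + d - k) (by omega) hx (hk'.trans hx)
        (by rwa [show k + (m + d - k) = m + d by omega])
        (by rwa [show k + (m + d - k) = m + d by omega])
      exact ⟨m', by omega, hbridge⟩
    · have hx' : t k = !x := Bool.eq_not.2 hx
      exact ih (k - m) (by omega) h₀ h₁ (by rwa [show m + (k - m) = k by omega])
        (by rw [show m + (k - m) = k by omega, hk', hx'])

theorem IsAlternatingBridge.two_le {t : ℕ → Bool} {m d : ℕ} {x : Bool}
    (h : IsAlternatingBridge t m d x) : 2 ≤ d := by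
  obtain ⟨h₀, h₁, h₂, -, -⟩ := h
  by_contra! hd
  interval_cases d <;> simp_all

theorem IsAlternatingBridge.third {t : ℕ → Bool} {m d : ℕ} {x : Bool}
    (h : IsAlternatingBridge t m d x) : t (m + 2) = !x := by
  have := h.two_le
  rw [h.alternating (m + 1) (by omega) (by omega), h.second]

theorem IsAlternatingBridge.cut_ne {t : ℕ → Bool} {m d : ℕ} {x : Bool}
    (h : IsAlternatingBridge t m d x) : t (m + 1) ≠ t (m + 1 + 1) := by
  rw [h.second, h.third]
  simp

theorem IsMarkoffCut.mirror_succ {t : ℕ → Bool} {m i j : ℕ} (h : IsMarkoffCut t (m + 1) i)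
    (hj : j < i) : t (m - j) = t (m + 3 + j) := by
  simpa [add_assoc, add_comm] using (h.mirror j hj).symm

theorem IsAlternatingBridge.exists_doubled_left {t : ℕ → Bool} {m d i : ℕ} {x : Bool}
    (h : IsAlternatingBridge t m d x) (hcut : IsMarkoffCut t (m + 1) i) :
    ∃ e, 0 < e ∧ e + 2 ≤ d ∧ e ≤ i ∧ t (m - e) = !x ∧ t (m - (e - 1)) = !x := by
  have hd := h.two_le
  have hleft : t (m - i) = !x := by rw [← h.third, ← hcut.left, Nat.add_sub_cancel]
  have hright : t (m + 3 + i) = x := by rw [← h.second, ← hcut.right]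
  have hpos : ∀ e, t (m - e) = !x → 0 < e := fun e he => by
    rw [Nat.pos_iff_ne_zero]
    rintro rfl
    simp [h.first] at he
  by_cases hid : i + 2 < d
  · have hi := hpos i hleft
    refine ⟨i, hi, by omega, le_rfl, hleft, ?_⟩
    have hstep := h.alternating (m + 3 + (i - 1)) (by omega) (by omega)
    rw [show m + 3 + (i - 1) + 1 = m + 3 + i by omega, hright] at hstep
    rw [hcut.mirror_succ (by omega), hstep, Bool.not_not]
  · have hne : i ≠ d - 2 := by
      rintro rfl
      rw [show m + 3 + (d - 2) = m + d + 1 by omega, h.last] at hright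
      simp at hright
    have hlast : t (m - (d - 2)) = !x := by
      rw [hcut.mirror_succ (by omega), show m + 3 + (d - 2) = m + d + 1 by omega, h.last]
    have hd₂ := hpos _ hlast
    refine ⟨d - 2, hd₂, by omega, by omega, hlast, ?_⟩
    rw [hcut.mirror_succ (by omega), show m + 3 + (d - 2 - 1) = m + d by omega, h.penultimate]

-- Mirroring the bridge at the cut between its second and third letters puts a shorter bridge just
-- to the left of that cut.
theorem IsAlternatingBridge.exists_shorter {t : ℕ → Bool} {m d i : ℕ} {x : Bool}
    (h : IsAlternatingBridge t m d x) (hcut : IsMarkoffCut t (m + 1) i) (hi : i ≤ m) :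
    ∃ e < d, e ≤ i ∧ IsAlternatingBridge t (m - e) e (!x) := by
  obtain ⟨e, he, hed, hei, he₀, he₁⟩ := h.exists_doubled_left hcut
  refine ⟨e, by omega, hei, he₀, ?_, ?_, ?_, fun k hk hkm => ?_⟩
  · rw [show m - e + 1 = m - (e - 1) by omega, he₁]
  · rw [show m - e + e = m by omega, h.first, Bool.not_not]
  · rw [show m - e + e = m by omega, h.second, Bool.not_not]
  · have hk₀ := hcut.mirror_succ (j := m - k) (by omega)
    have hk₁ := hcut.mirror_succ (j := m - k - 1) (by omega)
    have hstep := h.alternating (m + 3 + (m - k - 1)) (by omega) (by omega)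
    rw [show m - (m - k) = k by omega] at hk₀
    rw [show m - (m - k - 1) = k + 1 by omega] at hk₁
    rw [show m + 3 + (m - k - 1) + 1 = m + 3 + (m - k) by omega] at hstep
    rw [hk₀, hk₁, hstep, Bool.not_not]

theorem IsBoundedMarkoff.not_frequently_isAlternatingBridge {K : ℕ} {t : ℕ → Bool}
    (h : IsBoundedMarkoff K t) (D : ℕ) :
    ¬ ∀ M, ∃ m ≥ M, ∃ d < D, ∃ x, IsAlternatingBridge t m d x := by
  obtain ⟨N, hN⟩ := eventually_atTop.1 h
  induction D with
  | zero => exact fun hfreq => by simpa using hfreq 0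
  | succ D ih =>
    refine fun hfreq => ih fun M => ?_
    obtain ⟨m, hm, d, hd, x, hbridge⟩ := hfreq (M + N + K)
    obtain ⟨i, hi, hcut⟩ := hN (m + 1) (by omega) (hbridge.cut_ne)
    obtain ⟨e, hed, hei, hshort⟩ := hbridge.exists_shorter hcut (by omega)
    exact ⟨m - e, by omega, e, by omega, !x, hshort⟩

theorem IsBoundedMarkoff.exists_eventually_not_doubled {K : ℕ} {t : ℕ → Bool}
    (h : IsBoundedMarkoff K t) : ∃ x, ∀ᶠ n in atTop, t n = x → t (n + 1) = !x := by
  by_contra! hdouble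
  obtain ⟨N, hN⟩ := eventually_atTop.1 h
  refine h.not_frequently_isAlternatingBridge K fun M => ?_
  obtain ⟨m, hm, hm₀, hm₁⟩ := (frequently_atTop.1 (hdouble true)) (M + N + K)
  obtain ⟨n, hn, hn₀, hn₁⟩ := (frequently_atTop.1 (hdouble false)) m
  obtain ⟨k, hk, d, hbridge⟩ := exists_isAlternatingBridge (t := t) (n - m) (m := m) (x := true)
    hm₀ (by simpa using hm₁) (by rw [show m + (n - m) = n by omega, hn₀]; rfl)
    (by rw [show m + (n - m) = n by omega]; simpa using hn₁)
  obtain ⟨i, hi, hcut⟩ := hN (k + 1) (by omega) hbridge.cut_ne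
  obtain ⟨e, -, hei, hshort⟩ := hbridge.exists_shorter hcut (by omega)
  exact ⟨k - e, by omega, e, by omega, _, hshort⟩

/-- Cut `t`, from position `N` on, into blocks `x y` and `y`, where `y` is the letter other
than `x`; this is the starting position of the `i`-th block. -/
def blockStart (t : ℕ → Bool) (x : Bool) (N : ℕ) : ℕ → ℕ
  | 0 => N
  | i + 1 => blockStart t x N i + if t (blockStart t x N i) = x then 2 else 1

/-- The word obtained from `t` by contracting each block `x y` to the letter `x`. -/
def contract (t : ℕ → Bool) (x : Bool) (N i : ℕ) : Bool :=
  t (blockStart t x N i)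

section Contract

variable {t : ℕ → Bool} {x : Bool} {N : ℕ}

theorem blockStart_succ_of_eq {i : ℕ} (h : contract t x N i = x) :
    blockStart t x N (i + 1) = blockStart t x N i + 2 :=
  congrArg (_ + ·) (if_pos h)

theorem blockStart_succ_of_eq_not {i : ℕ} (h : contract t x N i = !x) :
    blockStart t x N (i + 1) = blockStart t x N i + 1 :=
  congrArg (_ + ·) (if_neg (Bool.eq_not.1 h))

theorem add_le_blockStart (i : ℕ) : N + i ≤ blockStart t x N i := by
  induction i with
  | zero => exact le_rfl
  | succ i ih =>
    rw [blockStart]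
    split_ifs <;> omega

theorem exists_eq_blockStart_or_add_one {n : ℕ} (hn : N ≤ n) :
    ∃ k, n = blockStart t x N k ∨ n = blockStart t x N k + 1 ∧ contract t x N k = x := by
  induction n, hn using Nat.le_induction with
  | base => exact ⟨0, Or.inl rfl⟩
  | succ n hn ih =>
    obtain ⟨k, rfl | ⟨rfl, hk⟩⟩ := ih
    · by_cases h : contract t x N k = x
      · exact ⟨k, Or.inr ⟨rfl, h⟩⟩
      · exact ⟨k + 1, Or.inl (blockStart_succ_of_eq_not (Bool.eq_not.2 h)).symm⟩
    · exact ⟨k + 1, Or.inl (blockStart_succ_of_eq hk).symm⟩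

variable (hx : ∀ n ≥ N, t n = x → t (n + 1) = !x)
include hx

theorem apply_blockStart_add_one {i : ℕ} (h : contract t x N i = x) :
    t (blockStart t x N i + 1) = !x :=
  hx _ (le_trans (Nat.le_add_right N i) (add_le_blockStart i)) h

theorem apply_blockStart_succ_sub_one (i : ℕ) : t (blockStart t x N (i + 1) - 1) = !x := by
  by_cases h : contract t x N i = x
  · rw [blockStart_succ_of_eq h]
    exact apply_blockStart_add_one hx h
  · rw [blockStart_succ_of_eq_not (Bool.eq_not.2 h)]
    exact Bool.eq_not.2 h

theorem apply_blockStart_add_two_sub_two (i : ℕ) :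
    t (blockStart t x N (i + 2) - 2) = contract t x N (i + 1) := by
  by_cases h : contract t x N (i + 1) = x
  · rw [blockStart_succ_of_eq h]
    rfl
  · have h' := Bool.eq_not.2 h
    rw [blockStart_succ_of_eq_not h', h', ← apply_blockStart_succ_sub_one hx i]
    rfl

theorem blockStart_cut {i : ℕ} (h : contract t x N i ≠ contract t x N (i + 1)) :
    t (blockStart t x N i + 1) = contract t x N (i + 1) ∧ t (blockStart t x N i + 2) = !x ∧
      blockStart t x N (i + 2) = blockStart t x N i + 3 := by
  by_cases hi : contract t x N i = x
  · have hi' : contract t x N (i + 1) = !x := Bool.eq_not.2 fun h' => h (hi.trans h'.symm)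
    have hstart := blockStart_succ_of_eq hi
    refine ⟨by rw [hi', apply_blockStart_add_one hx hi], ?_, ?_⟩
    · rw [← hstart, ← hi', contract]
    · rw [blockStart_succ_of_eq_not hi', hstart]
  · have hi' : contract t x N (i + 1) = x := by
      rw [Bool.eq_not.2 hi] at h
      simpa using h.symm
    have hstart := blockStart_succ_of_eq_not (Bool.eq_not.2 hi)
    refine ⟨by rw [← hstart, contract], ?_, ?_⟩
    · rw [← apply_blockStart_add_one hx hi', hstart]
    · rw [blockStart_succ_of_eq hi', hstart]

theorem exists_mirror_extension {q D k m : ℕ} (hright : blockStart t x N m = q + 3 + D)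
    (hleft : blockStart t x N (k + 2) + D = q)
    (hletter : contract t x N m = contract t x N (k + 1))
    (hmirror : ∀ j ≤ D, t (q + 2 + j) = t (q - 1 - j)) :
    ∃ D' > D, blockStart t x N (m + 1) = q + 3 + D' ∧ blockStart t x N (k + 1) + D' = q ∧
      ∀ j ≤ D', t (q + 2 + j) = t (q - 1 - j) := by
  have hnext : t (q + 2 + (D + 1)) = t (q - 1 - (D + 1)) := by
    have hprev := apply_blockStart_add_two_sub_two hx k
    rw [show blockStart t x N (k + 2) - 2 = q - 1 - (D + 1) by omega] at hprev
    rw [hprev, ← hletter, contract, hright, show q + 2 + (D + 1) = q + 3 + D by omega]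
  by_cases hy : contract t x N (k + 1) = x
  · have hm := blockStart_succ_of_eq (hletter.trans hy)
    have hk : blockStart t x N (k + 2) = _ := blockStart_succ_of_eq hy
    refine ⟨D + 2, by omega, by omega, by omega, fun j hj => ?_⟩
    rcases show j ≤ D ∨ j = D + 1 ∨ j = D + 2 by omega with hj | rfl | rfl
    · exact hmirror j hj
    · exact hnext
    · have hlast := apply_blockStart_succ_sub_one hx k
      rw [show blockStart t x N (k + 1) - 1 = q - 1 - (D + 2) by omega] at hlast
      rw [hlast, ← apply_blockStart_add_one hx (hletter.trans hy), hright,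
        show q + 3 + D + 1 = q + 2 + (D + 2) by omega]
  · have hm := blockStart_succ_of_eq_not (hletter.trans (Bool.eq_not.2 hy))
    have hk : blockStart t x N (k + 2) = _ := blockStart_succ_of_eq_not (Bool.eq_not.2 hy)
    refine ⟨D + 1, by omega, by omega, by omega, fun j hj => ?_⟩
    rcases Nat.le_succ_iff.1 hj with hj | rfl
    · exact hmirror j hj
    · exact hnext

theorem exists_mirror_of_contract_mirror {i l : ℕ} (hli : l < i)
    (hcut : contract t x N i ≠ contract t x N (i + 1))
    (hmirror : ∀ j < l, contract t x N (i + 2 + j) = contract t x N (i - 1 - j)) :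
    ∃ D ≥ l, blockStart t x N (i + 2 + l) = blockStart t x N i + 3 + D ∧
      blockStart t x N (i - l) + D = blockStart t x N i ∧
      ∀ j ≤ D, t (blockStart t x N i + 2 + j) = t (blockStart t x N i - 1 - j) := by
  induction l with
  | zero =>
    obtain ⟨-, htwo, hthree⟩ := blockStart_cut hx hcut
    refine ⟨0, le_rfl, hthree, rfl, fun j hj => ?_⟩
    obtain rfl : j = 0 := by omega
    have hlast := apply_blockStart_succ_sub_one hx (i - 1)
    rw [Nat.sub_add_cancel hli] at hlast
    rw [add_zero, htwo, Nat.sub_zero, hlast]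
  | succ l ih =>
    obtain ⟨D, hlD, hright, hleft, ht⟩ := ih (by omega) fun j hj => hmirror j (by omega)
    have hletter := hmirror l (by omega)
    rw [show i - 1 - l = i - l - 2 + 1 by omega] at hletter
    rw [show i - l = i - l - 2 + 2 by omega] at hleft
    obtain ⟨D', hD', hright', hleft', ht'⟩ := exists_mirror_extension hx hright hleft hletter ht
    rw [show i - l - 2 + 1 = i - (l + 1) by omega] at hleft'
    exact ⟨D', by omega, hright', hleft', ht'⟩

theorem IsMarkoffCut.exists_contract {i K r : ℕ} (hKi : K < i) (hrK : r ≤ K)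
    (hcut : contract t x N i ≠ contract t x N (i + 1))
    (hr : IsMarkoffCut t (blockStart t x N i) r) :
    ∃ l < K, IsMarkoffCut (contract t x N) i l := by
  have hone := (blockStart_cut hx hcut).1
  have hr_ne : t (blockStart t x N i + 2 + r) ≠ t (blockStart t x N i - 1 - r) := by
    rw [hr.right, hr.left, hone]
    exact hcut
  obtain ⟨k, hkK, hk⟩ :
      ∃ k < K, contract t x N (i + 2 + k) ≠ contract t x N (i - 1 - k) := by
    by_contra! hmirror
    obtain ⟨D, hKD, -, -, ht⟩ := exists_mirror_of_contract_mirror hx hKi hcut hmirror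
    exact hr_ne (ht r (by omega))
  obtain ⟨l, hlk, hl, hmirror⟩ := exists_first_ne (f := fun k => contract t x N (i + 2 + k))
    (g := fun k => contract t x N (i - 1 - k)) hk
  obtain ⟨D, -, hright, hleft, ht⟩ :=
    exists_mirror_of_contract_mirror hx (l := l) (by omega) hcut hmirror
  have hDr : D < r := by
    by_contra! hrD
    exact hr_ne (ht r hrD)
  have hletter_right : contract t x N (i + 2 + l) = t (blockStart t x N i + 2 + (D + 1)) := by
    rw [contract, hright]
    congr 1
    omega
  have hletter_left : contract t x N (i - 1 - l) = t (blockStart t x N i - 1 - (D + 1)) := by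
    have := apply_blockStart_add_two_sub_two hx (i - l - 2)
    rw [show i - l - 2 + 2 = i - l by omega, show i - l - 2 + 1 = i - 1 - l by omega] at this
    rw [← this]
    congr 1
    omega
  obtain rfl : r = D + 1 := by
    by_contra hne
    have hne' := hr.mirror (D + 1) (by omega)
    rw [← hletter_right, ← hletter_left] at hne'
    exact hl hne'
  exact ⟨l, by omega, hmirror, hletter_right.trans hr.right,
    hletter_left.trans (hr.left.trans hone)⟩

theorem IsBoundedMarkoff.contract {K : ℕ} (h : IsBoundedMarkoff (K + 1) t) :
    IsBoundedMarkoff K (contract t x N) := by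
  obtain ⟨M, hM⟩ := eventually_atTop.1 h
  refine eventually_atTop.2 ⟨M + K + 1, fun i hi hcut => ?_⟩
  have hstart := add_le_blockStart (t := t) (x := x) (N := N) i
  obtain ⟨r, hr, hrcut⟩ := hM (blockStart t x N i) (by omega)
    (by rw [(blockStart_cut hx hcut).1]; exact hcut)
  exact hrcut.exists_contract hx (by omega) (by omega) hcut

theorem EventuallyPeriodic.of_contract (h : EventuallyPeriodic (contract t x N)) :
    EventuallyPeriodic t := by
  obtain ⟨q, hq, h⟩ := h
  obtain ⟨I, hI⟩ := eventually_atTop.1 h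
  have hmono : StrictMono (blockStart t x N) := strictMono_nat_of_lt_succ fun i => by
    rw [blockStart]
    split_ifs <;> omega
  have hIq := hmono (show I < I + q by omega)
  set P := blockStart t x N (I + q) - blockStart t x N I
  have hshift : ∀ i ≥ I, blockStart t x N (i + q) = blockStart t x N i + P := by
    intro i hi
    induction i, hi using Nat.le_induction with
    | base => omega
    | succ i hi ih =>
      have hletter : t (blockStart t x N (i + q)) = t (blockStart t x N i) := hI i hi
      rw [show i + 1 + q = i + q + 1 by omega, blockStart, blockStart, hletter, ih]
      omega
  refine ⟨P, by omega, eventually_atTop.2 ⟨blockStart t x N I + 2, fun n hn => ?_⟩⟩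
  have hIN := add_le_blockStart (t := t) (x := x) (N := N) I
  obtain ⟨k, hk⟩ := exists_eq_blockStart_or_add_one (t := t) (x := x) (show N ≤ n by omega)
  have hIk : I ≤ k := by
    by_contra! hkI
    have := hmono hkI
    omega
  have hletter := hI k hIk
  rcases hk with rfl | ⟨rfl, hkx⟩
  · rw [← hshift k hIk]
    exact hletter
  · rw [apply_blockStart_add_one hx hkx, add_right_comm, ← hshift k hIk,
      apply_blockStart_add_one hx (hletter.trans hkx)]

end Contract

-- A letter that is eventually never doubled can be contracted, which lowers `K`.
theorem IsBoundedMarkoff.eventuallyPeriodic {K : ℕ} {t : ℕ → Bool} (h : IsBoundedMarkoff K t) :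
    EventuallyPeriodic t := by
  induction K generalizing t with
  | zero =>
    refine ⟨1, one_pos, h.mono fun n hn => ?_⟩
    by_contra hne
    obtain ⟨i, hi, -⟩ := hn (Ne.symm hne)
    exact absurd hi (Nat.not_lt_zero i)
  | succ K ih =>
    obtain ⟨x, hx⟩ := h.exists_eventually_not_doubled
    obtain ⟨N, hN⟩ := eventually_atTop.1 hx
    exact (ih (h.contract hN)).of_contract hN

/-! ### Two-sided expansions with bounded differences -/

theorem abs_toInt_sub_toInt {x y : Bool} (h : x ≠ y) : |(x.toInt : ℝ) - (y.toInt : ℝ)| = 1 := by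
  cases x <;> cases y <;> simp_all

section Expansion

variable {r : ℝ} {t : ℕ → Bool} {V W : ℕ → ℝ}
  (hV : ∀ n, V n = (t (n + 1)).toInt + r * V (n + 1))
  (hW : ∀ n, W (n + 1) = (t (n + 1)).toInt + r * W n)
include hV hW

theorem expansion_sub_expansion (m k : ℕ) :
    V m - W (k + 1) = (t (m + 1)).toInt - (t (k + 1)).toInt + r * (V (m + 1) - W k) := by
  rw [hV m, hW k]
  ring

theorem expansion_sub_expansion_of_mirror {n i : ℕ} (hi : i < n)
    (hmirror : ∀ j < i, t (n + 2 + j) = t (n - 1 - j)) :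
    V (n + 1) - W (n - 1) = r ^ i * (V (n + 1 + i) - W (n - 1 - i)) := by
  induction i with
  | zero => simp
  | succ i ih =>
    have hletter := hmirror i (by omega)
    rw [show n - 1 - i = n - 1 - (i + 1) + 1 by omega,
      show n + 2 + i = n + 1 + i + 1 by omega] at hletter
    rw [ih (by omega) fun j hj => hmirror j (by omega),
      show n - 1 - i = n - 1 - (i + 1) + 1 by omega, expansion_sub_expansion hV hW, hletter,
      ← add_assoc (n + 1)]
    ring

-- At a cut, `V n - W n = ±1 + r * X` with `X = V (n + 1) - W (n - 1)`, so the bound forces `X` to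
-- have the sign opposite to `±1`.
theorem pow_mul_cut_mul_sub_le_neg {δ : ℝ} {n i : ℕ} (hcut : t n ≠ t (n + 1))
    (hVW : |V n - W n| ≤ 1 - δ) (hi : i < n)
    (hmirror : ∀ j < i, t (n + 2 + j) = t (n - 1 - j)) :
    r ^ i * ((((t (n + 1)).toInt : ℝ) - ((t n).toInt : ℝ)) *
      (r * (V (n + 1 + i) - W (n - 1 - i)))) ≤ -δ := by
  have hstep := expansion_sub_expansion hV hW n (n - 1)
  have hσ := abs_toInt_sub_toInt hcut.symm
  rw [Nat.sub_add_cancel (by omega), expansion_sub_expansion_of_mirror hV hW hi hmirror] at hstep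
  generalize ((t (n + 1)).toInt : ℝ) - ((t n).toInt : ℝ) = σ at hstep hσ ⊢
  have hσσ : σ * σ = 1 := by rw [← abs_mul_abs_self, hσ, one_mul]
  have hle : σ * (V n - W n) ≤ 1 - δ := by
    refine (le_abs_self _).trans ?_
    rwa [abs_mul, hσ, one_mul]
  rw [hstep, mul_add, hσσ] at hle
  linarith

-- The sign of `V (n + 1 + i) - W (n - 1 - i)` is that of its leading term.
theorem isMarkoffCut_of_mirror_of_ne {n i : ℕ} (hr : 0 ≤ r) (hcut : t n ≠ t (n + 1))
    (hi : i + 1 < n) (hbound : r * |V (n + 1 + i + 1) - W (n - 1 - (i + 1))| ≤ 1)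
    (hneg : r ^ i * ((((t (n + 1)).toInt : ℝ) - ((t n).toInt : ℝ)) *
      (r * (V (n + 1 + i) - W (n - 1 - i)))) < 0)
    (hmirror : ∀ j < i, t (n + 2 + j) = t (n - 1 - j))
    (hne : t (n + 2 + i) ≠ t (n - 1 - i)) : IsMarkoffCut t n i := by
  have hright : t (n + 2 + i) = t n := by
    by_contra hright
    have hright' : t (n + 1 + i + 1) = t (n + 1) := by
      rw [show n + 1 + i + 1 = n + 2 + i by omega]
      exact (Bool.eq_not.2 hright).trans (Bool.eq_not.2 hcut.symm).symm
    have hleft' : t (n - 1 - (i + 1) + 1) = t n := by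
      rw [show n - 1 - (i + 1) + 1 = n - 1 - i by omega]
      exact (Bool.eq_not.2 hne.symm).trans (Bool.eq_not.2 (Ne.symm hright)).symm
    have hσ := abs_toInt_sub_toInt hcut.symm
    rw [show n - 1 - i = n - 1 - (i + 1) + 1 by omega, expansion_sub_expansion hV hW, hright',
      hleft'] at hneg
    generalize ((t (n + 1)).toInt : ℝ) - ((t n).toInt : ℝ) = σ at hneg hσ
    generalize V (n + 1 + i + 1) - W (n - 1 - (i + 1)) = Y at hneg hbound
    refine hneg.not_ge (mul_nonneg (pow_nonneg hr i) ?_)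
    have hY : -1 ≤ σ * (r * Y) := by
      refine neg_le_of_abs_le ?_
      rwa [abs_mul, hσ, one_mul, abs_mul, abs_of_nonneg hr]
    calc 0 ≤ r * (1 + σ * (r * Y)) := mul_nonneg hr (by linarith)
      _ = r * (|σ| * |σ| + σ * (r * Y)) := by rw [hσ, one_mul]
      _ = σ * (r * (σ + r * Y)) := by rw [abs_mul_abs_self]; ring
  exact ⟨hmirror, hright, (Bool.eq_not.2 (hright ▸ hne.symm)).trans (Bool.eq_not.2 hcut.symm).symm⟩

theorem isBoundedMarkoff_of_abs_sub_le {C δ : ℝ} (hr₀ : 0 ≤ r) (hr₁ : r < 1) (hrC : r * C ≤ 1)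
    (hδ : 0 < δ) (hC : ∀ m n, |V m - W n| ≤ C) (hVW : ∀ n, |V n - W n| ≤ 1 - δ) :
    ∃ K, IsBoundedMarkoff K t := by
  obtain ⟨K, hK⟩ := exists_pow_lt_of_lt_one hδ hr₁
  refine ⟨K, eventually_atTop.2 ⟨K + 1, fun n hn hcut => ?_⟩⟩
  have hbound : ∀ m k, r * |V m - W k| ≤ 1 := fun m k =>
    (mul_le_mul_of_nonneg_left (hC m k) hr₀).trans hrC
  obtain ⟨k, hkK, hk⟩ : ∃ k < K, t (n + 2 + k) ≠ t (n - 1 - k) := by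
    by_contra! hmirror
    have hle := pow_mul_cut_mul_sub_le_neg hV hW hcut (hVW n) (by omega) hmirror
    have habs := neg_abs_le ((((t (n + 1)).toInt : ℝ) - ((t n).toInt : ℝ)) *
      (r * (V (n + 1 + K) - W (n - 1 - K))))
    rw [abs_mul, abs_toInt_sub_toInt hcut.symm, one_mul, abs_mul, abs_of_nonneg hr₀] at habs
    have hge := mul_le_mul_of_nonneg_left ((neg_le_neg (hbound _ _)).trans habs) (pow_nonneg hr₀ K)
    linarith
  obtain ⟨l, hlk, hl, hmirror⟩ := exists_first_ne (f := fun k => t (n + 2 + k))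
    (g := fun k => t (n - 1 - k)) hk
  have hneg := pow_mul_cut_mul_sub_le_neg hV hW hcut (hVW n) (show l < n by omega) hmirror
  exact ⟨l, by omega, isMarkoffCut_of_mirror_of_ne hV hW hr₀ hcut (by omega) (hbound _ _)
    (by linarith) hmirror hl⟩

end Expansion

/-! ### Digit sequences -/

/-- The integers `a n` are the digits of the errors `ε n`, i.e. the defects of `ε` from satisfying
the recurrence `x (n + 2) = b * x (n + 1) + s * x n`. -/
def IsDigitSequence (b s : ℤ) (ε : ℕ → ℝ) (a : ℕ → ℤ) : Prop :=
  ∀ n, ε (n + 2) = b * ε (n + 1) + s * ε n - a n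

/-- For `α ^ 2 = b * α + s`, the sum of the present and future digits of `ε`, weighted with powers
of `α⁻¹`. -/
def futureTail (α : ℝ) (s : ℤ) (ε : ℕ → ℝ) (n : ℕ) : ℝ :=
  α * ε (n + 1) + s * ε n

/-- For `α ^ 2 = b * α + s`, the sum of the past digits of `ε`, weighted with powers of the
conjugate `b - α`, up to a contribution of the initial values. -/
def pastTail (α : ℝ) (ε : ℕ → ℝ) (n : ℕ) : ℝ :=
  α * ε n - ε (n + 1)

section DigitSequence

variable {b s : ℤ} {α ξ : ℝ} {ε : ℕ → ℝ} {a : ℕ → ℤ}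

theorem IsDigitSequence.futureTail_eq (h : IsDigitSequence b s ε a) (hα : α ^ 2 = b * α + s)
    (hα₀ : α ≠ 0) (n : ℕ) :
    futureTail α s ε n = a n + α⁻¹ * futureTail α s ε (n + 1) := by
  rw [futureTail, futureTail, h n]
  field_simp
  linear_combination ε (n + 1) * hα

theorem IsDigitSequence.pastTail_succ (h : IsDigitSequence b s ε a) (hα : α ^ 2 = b * α + s)
    (n : ℕ) : pastTail α ε (n + 1) = a n + (b - α) * pastTail α ε n := by
  rw [pastTail, pastTail, h n]
  linear_combination ε n * hα

theorem abs_futureTail_le {c : ℝ} (hα : 0 ≤ α) (hε : ∀ n, |ε n| ≤ c) (n : ℕ) :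
    |futureTail α s ε n| ≤ (α + |(s : ℝ)|) * c := by
  rw [add_mul]
  refine (abs_add_le _ _).trans (add_le_add ?_ ?_) <;> rw [abs_mul]
  · rw [abs_of_nonneg hα]
    exact mul_le_mul_of_nonneg_left (hε _) hα
  · exact mul_le_mul_of_nonneg_left (hε _) (abs_nonneg _)

theorem abs_pastTail_le {c : ℝ} (hα : 0 ≤ α) (hε : ∀ n, |ε n| ≤ c) (n : ℕ) :
    |pastTail α ε n| ≤ (α + 1) * c := by
  rw [add_mul, one_mul]
  refine (abs_sub _ _).trans (add_le_add ?_ (hε _))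
  rw [abs_mul, abs_of_nonneg hα]
  exact mul_le_mul_of_nonneg_left (hε _) hα

theorem EventuallyPeriodic.of_eq_add_mul {F : ℕ → ℝ} {r M : ℝ} (ha : EventuallyPeriodic a)
    (hr : |r| < 1) (hF : ∀ n, F n = a n + r * F (n + 1)) (hM : ∀ n, |F n| ≤ M) :
    EventuallyPeriodic F := by
  obtain ⟨p, hp, ha⟩ := ha
  obtain ⟨N, hN⟩ := eventually_atTop.1 ha
  have hdiff : ∀ n ≥ N, ∀ k, F (n + p) - F n = r ^ k * (F (n + k + p) - F (n + k)) := by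
    intro n hn k
    induction k with
    | zero => simp
    | succ k ih =>
      rw [ih, hF (n + k + p), hF (n + k), hN (n + k) (by omega), ← add_assoc,
        add_right_comm (n + k)]
      ring
  refine ⟨p, hp, eventually_atTop.2 ⟨N, fun n hn => sub_eq_zero.1 (abs_nonpos_iff.1 ?_)⟩⟩
  have hlim : Tendsto (fun k => |r| ^ k * (M + M)) atTop (nhds 0) := by
    simpa using (tendsto_pow_atTop_nhds_zero_of_lt_one (abs_nonneg r) hr).mul_const (M + M)
  refine ge_of_tendsto' hlim fun k => ?_
  rw [hdiff n hn k, abs_mul, abs_pow]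
  gcongr
  exact (abs_sub _ _).trans (add_le_add (hM _) (hM _))

theorem isDigitSequence_mul_pow_sub (hα : α ^ 2 = b * α + s) (ξ : ℝ) (u : ℕ → ℤ) :
    IsDigitSequence b s (fun n => ξ * α ^ n - u n)
      fun n => u (n + 2) - b * u (n + 1) - s * u n := by
  intro n
  push_cast
  linear_combination ξ * α ^ n * hα

theorem mem_adjoin_of_eventuallyPeriodic {c : ℝ} {u : ℕ → ℤ} (hα : α ^ 2 = b * α + s)
    (hα₁ : 1 < α) (hs : α ^ 2 + s ≠ 0)
    (hdigit : IsDigitSequence b s (fun n => ξ * α ^ n - u n) a) (ha : EventuallyPeriodic a)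
    (hc : ∀ n, |ξ * α ^ n - u n| ≤ c) : ξ ∈ ℚ⟮α⟯ := by
  have hα₀ : 0 < α := zero_lt_one.trans hα₁
  set F := futureTail α s fun n => ξ * α ^ n - u n with hF
  obtain ⟨p, hp, hper⟩ := ha.of_eq_add_mul (F := F)
    (by rw [abs_of_pos (inv_pos.2 hα₀)]; exact inv_lt_one_of_one_lt₀ hα₁)
    (hdigit.futureTail_eq hα hα₀.ne') (abs_futureTail_le hα₀.le hc)
  obtain ⟨n, hn⟩ := hper.exists
  have hpow : α ^ p - 1 ≠ 0 := (sub_pos.2 (one_lt_pow₀ hα₁ hp.ne')).ne'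
  have heq : ξ = (α * (u (n + p + 1) - u (n + 1)) + s * (u (n + p) - u n)) /
      (α ^ n * (α ^ p - 1) * (α ^ 2 + s)) := by
    rw [eq_div_iff (mul_ne_zero (mul_ne_zero (pow_ne_zero n hα₀.ne') hpow) hs)]
    simp only [hF, futureTail] at hn
    linear_combination hn
  have hmem : α ∈ ℚ⟮α⟯ := mem_adjoin_simple_self ℚ α
  have hint : ∀ k : ℤ, (k : ℝ) ∈ ℚ⟮α⟯ := fun k => intCast_mem _ k
  rw [heq]
  exact div_mem (add_mem (mul_mem hmem (sub_mem (hint _) (hint _)))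
      (mul_mem (hint _) (sub_mem (hint _) (hint _))))
    (mul_mem (mul_mem (pow_mem hmem _) (sub_mem (pow_mem hmem _) (one_mem _)))
      (add_mem (pow_mem hmem _) (hint _)))

end DigitSequence

/-! ### The upper limit -/

theorem isBoundedUnder_le_distNearestInt (α ξ : ℝ) :
    IsBoundedUnder (· ≤ ·) atTop fun n : ℕ => distNearestInt (ξ * α ^ n) :=
  isBoundedUnder_of ⟨1 / 2, fun _ => abs_sub_round _⟩

theorem isCoboundedUnder_le_distNearestInt (α ξ : ℝ) :
    IsCoboundedUnder (· ≤ ·) atTop fun n : ℕ => distNearestInt (ξ * α ^ n) :=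
  (isBoundedUnder_of ⟨0, fun _ => abs_nonneg _⟩ :
    IsBoundedUnder (· ≥ ·) atTop _).isCoboundedUnder_le

theorem limsupDist_le {α ξ e : ℝ} (h : ∀ c > e, ∀ᶠ n : ℕ in atTop, ∃ v : ℤ, |ξ * α ^ n - v| ≤ c) :
    limsupDist α ξ ≤ e :=
  le_of_forall_gt_imp_ge_of_dense fun c hc =>
    limsup_le_of_le (isCoboundedUnder_le_distNearestInt α ξ)
      ((h c hc).mono fun _ ⟨v, hv⟩ => (round_le _ v).trans hv)

theorem le_limsupDist {α ξ e : ℝ} {b s : ℤ} (hα : α ^ 2 = b * α + s) (hα₁ : 1 < α)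
    (hs : α ^ 2 + s ≠ 0)
    (hdigit : ∀ c < e, ∀ (ε : ℕ → ℝ) (a : ℕ → ℤ), IsDigitSequence b s ε a →
      (∀ n, |ε n| ≤ c) → EventuallyPeriodic a)
    (hξ : ξ ∉ ℚ⟮α⟯) : e ≤ limsupDist α ξ := by
  by_contra! hlt
  obtain ⟨c, hc, hce⟩ := exists_between hlt
  obtain ⟨N, hN⟩ := eventually_atTop.1
    (eventually_lt_of_limsup_lt hc (isBoundedUnder_le_distNearestInt α ξ))
  have hc' : ∀ n, |ξ * α ^ N * α ^ n - round (ξ * α ^ N * α ^ n)| ≤ c := fun n => by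
    rw [mul_assoc, ← pow_add]
    exact (hN (N + n) (by omega)).le
  have hdig := isDigitSequence_mul_pow_sub hα (ξ * α ^ N) fun n => round (ξ * α ^ N * α ^ n)
  have hmem := mem_adjoin_of_eventuallyPeriodic hα hα₁ hs hdig (hdigit c hce _ _ hdig hc') hc'
  refine hξ ?_
  rw [← mul_div_cancel_right₀ ξ (pow_ne_zero N (zero_lt_one.trans hα₁).ne')]
  exact div_mem hmem (pow_mem (mem_adjoin_simple_self ℚ α) N)

/-! ### Small errors have eventually periodic digits -/

theorem eq_toInt_sub_toInt {r x y : ℝ} {k : ℤ} (hr₀ : 0 < r) (hr₁ : r < 1) (hx : |x| < 1)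
    (hy : |y| < 1) (h : x = k + r * y) :
    k = (decide (y < 0)).toInt - (decide (x < 0)).toInt := by
  rw [abs_lt] at hx hy
  have hk₀ : (-2 : ℝ) < k := by nlinarith
  have hk₁ : (k : ℝ) < 2 := by nlinarith
  have hk₀' : -2 < k := by exact_mod_cast hk₀
  have hk₁' : k < 2 := by exact_mod_cast hk₁
  by_cases hx₀ : x < 0 <;> by_cases hy₀ : y < 0 <;> simp only [hx₀, hy₀, decide_true, decide_false,
    Bool.toInt_true, Bool.toInt_false] <;> interval_cases k <;> norm_num at h ⊢ <;> nlinarith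

theorem inv_mul_one_add_inv_le {B : ℤ} {β : ℝ} (hB : 3 ≤ B) (hβ₁ : 1 < β)
    (hβ : β ^ 2 = B * β - 1) : β⁻¹ * (1 + β⁻¹) ≤ 1 - β⁻¹ := by
  have hB' : (3 : ℝ) ≤ B := by exact_mod_cast hB
  have hβ₂ : 5 / 2 < β := by nlinarith
  have hr : β⁻¹ < 2 / 5 := by
    rw [inv_lt_comm₀ (by linarith) (by norm_num)]
    linarith
  nlinarith [inv_pos.2 (zero_lt_one.trans hβ₁)]

theorem EventuallyPeriodic.of_toInt_sub_toInt {t : ℕ → Bool} {a : ℕ → ℤ}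
    (ht : EventuallyPeriodic t) (ha : ∀ n, a n = (t (n + 1)).toInt - (t n).toInt) :
    EventuallyPeriodic a := by
  rw [funext ha]
  exact ht.map_adjacent fun x y => y.toInt - x.toInt

-- The signs of the future tails form a word `t` with `a n = t (n + 1) - t n`, and `F n + r * G n`
-- is proportional to the difference of the expansions of `t` into its future and its past.
theorem eventuallyPeriodic_of_tails {r δ : ℝ} {F G : ℕ → ℝ} {a : ℕ → ℤ} (hr₀ : 0 < r)
    (hr₁ : r < 1) (hr : r * (1 + r) ≤ 1 - r) (hδ : 0 < δ)
    (hF : ∀ n, |F n| < 1) (hG : ∀ n, |G n| < 1)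
    (hF_eq : ∀ n, F n = a n + r * F (n + 1)) (hG_succ : ∀ n, G (n + 1) = a n + r * G n)
    (hFG : ∀ n, |F n + r * G n| ≤ (1 - δ) * (1 - r)) : EventuallyPeriodic a := by
  set t : ℕ → Bool := fun n => decide (F n < 0) with ht
  have hdigit : ∀ n, a n = (t (n + 1)).toInt - (t n).toInt := fun n =>
    eq_toInt_sub_toInt hr₀ hr₁ (hF n) (hF (n + 1)) (hF_eq n)
  have hdigit' : ∀ n, (a n : ℝ) = (t (n + 1)).toInt - (t n).toInt := fun n => by
    exact_mod_cast hdigit n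
  have hF_add : ∀ n, 0 ≤ F n + (t n).toInt ∧ F n + (t n).toInt ≤ 1 := fun n => by
    have hFn := abs_lt.1 (hF n)
    by_cases hneg : F n < 0 <;> simp only [ht, hneg, decide_true, decide_false, Bool.toInt_true,
      Bool.toInt_false] <;> push_cast <;> constructor <;> linarith
  have ht_bound : ∀ n, (0 : ℝ) ≤ (t n).toInt ∧ ((t n).toInt : ℝ) ≤ 1 := fun n => by
    cases t n <;> simp
  have hr₁' : 0 < 1 - r := sub_pos.2 hr₁
  obtain ⟨K, hK⟩ := isBoundedMarkoff_of_abs_sub_le (r := r) (t := t) (C := (1 + r) / (1 - r))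
    (V := fun n => (F n + (t n).toInt) / (1 - r))
    (W := fun n => ((t n).toInt - r * G n) / (1 - r))
    (fun n => by
      field_simp
      rw [hF_eq n, hdigit']
      ring)
    (fun n => by
      field_simp
      rw [hG_succ n, hdigit']
      ring)
    hr₀.le hr₁ (by rwa [mul_div_assoc', div_le_one hr₁']) hδ
    (fun m n => by
      have hGn := abs_lt.1 (hG n)
      rw [← sub_div, abs_div, abs_of_pos hr₁']
      refine div_le_div_of_nonneg_right (abs_le.2 ⟨?_, ?_⟩) hr₁'.le <;>
        nlinarith [hF_add m, ht_bound n])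
    (fun n => by
      rw [← sub_div, add_comm, add_sub_sub_cancel, abs_div, abs_of_pos hr₁', div_le_iff₀ hr₁']
      exact hFG n)
  exact hK.eventuallyPeriodic.of_toInt_sub_toInt hdigit

theorem IsDigitSequence.eventuallyPeriodic_of_norm_one {B : ℤ} {β c : ℝ} {ε : ℕ → ℝ} {a : ℕ → ℤ}
    (hB : 3 ≤ B) (hβ₁ : 1 < β) (hβ : β ^ 2 = B * β - 1) (hc : c * (1 + β) < 1)
    (h : IsDigitSequence B (-1) ε a) (hε : ∀ n, |ε n| ≤ c) : EventuallyPeriodic a := by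
  have hβ' : β ^ 2 = B * β + ((-1 : ℤ) : ℝ) := by rw [hβ]; push_cast; ring
  have hβ₀ : 0 < β := zero_lt_one.trans hβ₁
  have hrβ : β⁻¹ * β = 1 := inv_mul_cancel₀ hβ₀.ne'
  have hr₁ : β⁻¹ < 1 := inv_lt_one_of_one_lt₀ hβ₁
  have hrB : (B : ℝ) - β = β⁻¹ := by
    field_simp
    linarith
  have hF : ∀ n, |futureTail β (-1) ε n| < 1 := fun n => by
    have := abs_futureTail_le (s := -1) hβ₀.le hε n
    rw [Int.cast_neg, Int.cast_one, abs_neg, abs_one] at this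
    linarith
  have hG : ∀ n, |pastTail β ε n| < 1 := fun n => by
    linarith [abs_pastTail_le hβ₀.le hε n]
  have hFG : ∀ n, |futureTail β (-1) ε n + β⁻¹ * pastTail β ε n| ≤
      (1 - (1 - c * (1 + β))) * (1 - β⁻¹) := fun n => by
    have heq : futureTail β (-1) ε n + β⁻¹ * pastTail β ε n =
        ε (n + 1) * (1 + β) * (1 - β⁻¹) := by
      rw [futureTail, pastTail]
      push_cast
      linear_combination (ε n + ε (n + 1)) * hrβ
    rw [heq, sub_sub_cancel, abs_mul, abs_mul, abs_of_pos (sub_pos.2 hr₁),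
      abs_of_pos (by linarith : 0 < 1 + β)]
    exact mul_le_mul_of_nonneg_right (mul_le_mul_of_nonneg_right (hε _) (by linarith))
      (sub_pos.2 hr₁).le
  exact eventuallyPeriodic_of_tails (inv_pos.2 hβ₀) hr₁ (inv_mul_one_add_inv_le hB hβ₁ hβ)
    (sub_pos.2 hc) hF hG (h.futureTail_eq hβ' hβ₀.ne') (hrB ▸ h.pastTail_succ hβ') hFG

theorem exists_eq_zero_of_alternating_sign {a : ℕ → ℤ} {P : ℕ → ℝ}
    (hzero : ∀ n, a n = 0 → P (n + 1) = -P n)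
    (hne : ∀ n, a (n + 1) ≠ 0 → 0 < P (n + 1) ∧ P (n + 2) < 0) :
    ∃ m, ∀ k, a (m + 2 * k) = 0 := by
  by_cases hall : ∀ n, a (n + 1) = 0
  · exact ⟨1, fun k => by rw [add_comm, hall]⟩
  push Not at hall
  obtain ⟨m, hm⟩ := hall
  have hpos_neg : ∀ n, 0 < P (n + 1) → P (n + 2) < 0 := fun n hn => by
    by_cases ha : a (n + 1) = 0
    · rw [hzero (n + 1) ha]
      linarith
    · exact (hne n ha).2
  have hneg_zero : ∀ n, P (n + 2) < 0 → a (n + 2) = 0 := fun n hn => by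
    by_contra ha
    exact hn.not_gt (hne (n + 1) ha).1
  have hpos : ∀ k, 0 < P (m + 2 * k + 1) := fun k => by
    induction k with
    | zero => exact (hne m hm).1
    | succ k ih =>
      have hneg := hpos_neg _ ih
      have hflip : P (m + 2 * k + 2 + 1) = _ := hzero _ (hneg_zero _ hneg)
      rw [mul_add, mul_one, ← add_assoc, hflip]
      linarith
  refine ⟨m + 2, fun k => ?_⟩
  rw [add_right_comm]
  exact hneg_zero _ (hpos_neg _ (hpos k))

theorem mul_pos_and_mul_neg_of_eq_add_mul {r k x y : ℝ} (hr₀ : 0 < r) (hr : r * (1 + r) ≤ 1)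
    (hk : |k| = 1) (hx : |x| < 1) (hy : |y| < 1 + r) (h : x = k + r * y) :
    0 < k * x ∧ k * y < 0 := by
  have hkk : k * k = 1 := by rw [← abs_mul_abs_self, hk, one_mul]
  have hkx : k * x < 1 := by
    refine (le_abs_self _).trans_lt ?_
    rwa [abs_mul, hk, one_mul]
  have hky : -(1 + r) < k * y := by
    refine neg_lt_of_abs_lt ?_
    rwa [abs_mul, hk, one_mul]
  have hmul : k * x = 1 + r * (k * y) := by rw [h, mul_add, hkk]; ring
  exact ⟨by nlinarith, by nlinarith⟩

theorem abs_lt_one_of_mul_eq_sq_mul_sub {b c q x u v : ℝ} (hb : 0 < b) (hu : |u| ≤ c) (hv : |v| ≤ c)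
    (hc : c * (1 + q ^ 2) < b) (h : b * x = q ^ 2 * u - v) : |x| < 1 := by
  refine lt_of_mul_lt_mul_left ?_ hb.le
  calc b * |x| = |q ^ 2 * u - v| := by rw [← h, abs_mul, abs_of_pos hb]
    _ ≤ |q ^ 2 * u| + |v| := abs_sub _ _
    _ ≤ q ^ 2 * c + c := by
      rw [abs_mul, abs_of_nonneg (sq_nonneg q)]
      exact add_le_add (mul_le_mul_of_nonneg_left hu (sq_nonneg q)) hv
    _ < b * 1 := by linarith

theorem inv_eq_sub_of_sq_eq {b α : ℝ} (hα₀ : 0 < α) (hα : α ^ 2 = b * α + 1) : α⁻¹ = α - b := by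
  field_simp
  linarith

theorem mul_sq_add_two_lt {b c α : ℝ} (hb : 0 ≤ b) (hα₀ : 0 < α)
    (hα : α ^ 2 = b * α + 1) (hc : c * (1 + α ^ 2) < b) : c * (b ^ 2 + 2) < b := by
  have hbα : b ≤ α := by nlinarith
  obtain hc₀ | hc₀ := le_or_gt 0 c
  · nlinarith [mul_nonneg hc₀ (sub_nonneg.2 hbα)]
  · nlinarith [mul_neg_of_neg_of_pos hc₀ (by positivity : 0 < b ^ 2 + 2)]

theorem add_one_mul_lt_one_add_inv {b c α : ℝ} (hα₀ : 0 < α) (hα : α ^ 2 = b * α + 1)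
    (hc : c * (1 + α ^ 2) < b) : (α + 1) * c < 1 + α⁻¹ := by
  have hcα : α * c < 1 := by
    refine lt_of_mul_lt_mul_right ?_ (by positivity : 0 ≤ 1 + α ^ 2)
    nlinarith
  calc (α + 1) * c = (1 + α⁻¹) * (α * c) := by field_simp
    _ < (1 + α⁻¹) * 1 := by gcongr
    _ = 1 + α⁻¹ := mul_one _

section NormNegOne

variable {b : ℤ} {α c : ℝ} {ε : ℕ → ℝ} {a : ℕ → ℤ} (hb : 1 ≤ b) (h : IsDigitSequence b 1 ε a)
  (hε : ∀ n, |ε n| ≤ c)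
include hb h hε

theorem IsDigitSequence.abs_digit_le_one (hc : c * (b ^ 2 + 2) < b) (n : ℕ) : |a n| ≤ 1 := by
  have hb' : (1 : ℝ) ≤ b := by exact_mod_cast hb
  have hdigit : (a n : ℝ) = b * ε (n + 1) + ε n - ε (n + 2) := by
    rw [h n]
    push_cast
    ring
  have hlt : |(a n : ℝ)| < 2 := by
    have h₀ := abs_le.1 (hε n)
    have h₁ := abs_le.1 (hε (n + 1))
    have h₂ := abs_le.1 (hε (n + 2))
    have hc' : c * (b + 2) < 2 := by nlinarith
    rw [hdigit, abs_lt]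
    constructor <;> nlinarith
  have hlt' : |a n| < 2 := by exact_mod_cast hlt
  omega

theorem IsDigitSequence.eq_zero_or_succ_eq_zero (hc : c * (b ^ 2 + 2) < b) (n : ℕ) :
    a n = 0 ∨ a (n + 1) = 0 := by
  have hb' : (1 : ℝ) ≤ b := by exact_mod_cast hb
  have hcb : c * (b ^ 2 + b + 2) < b + 1 := by nlinarith
  have h₀ := abs_le.1 (hε n)
  have h₁ := abs_le.1 (hε (n + 1))
  have h₂ := abs_le.1 (hε (n + 2))
  have h₃ := abs_le.1 (hε (n + 3))
  have hn := h n
  have hn' := h (n + 1)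
  push_cast at hn hn'
  have hsum : |(b * a n + a (n + 1) : ℝ)| < b + 1 := by
    have heq : (b * a n + a (n + 1) : ℝ) = (b ^ 2 + 1) * ε (n + 1) + b * ε n - ε (n + 3) := by
      linear_combination b * hn + hn'
    rw [heq, abs_lt]
    constructor <;> nlinarith
  have hdiff : |(a n - b * a (n + 1) : ℝ)| < b + 1 := by
    have heq : (a n - b * a (n + 1) : ℝ) = ε n - (b ^ 2 + 1) * ε (n + 2) + b * ε (n + 3) := by
      linear_combination hn - b * hn'
    rw [heq, abs_lt]
    constructor <;> nlinarith
  have hsum' : |b * a n + a (n + 1)| < b + 1 := by exact_mod_cast hsum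
  have hdiff' : |a n - b * a (n + 1)| < b + 1 := by exact_mod_cast hdiff
  have hle := abs_le.1 (h.abs_digit_le_one hb hε hc n)
  have hle' := abs_le.1 (h.abs_digit_le_one hb hε hc (n + 1))
  rw [abs_lt] at hsum' hdiff'
  obtain ha | ha | ha : a n = -1 ∨ a n = 0 ∨ a n = 1 := by omega
  all_goals
    obtain ha' | ha' | ha' : a (n + 1) = -1 ∨ a (n + 1) = 0 ∨ a (n + 1) = 1 := by omega
    all_goals
      rw [ha, ha'] at hsum' hdiff'
      omega

variable (hα : α ^ 2 = b * α + 1) (hc : c * (1 + α ^ 2) < b)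
include hα hc

theorem IsDigitSequence.abs_futureTail_succ_lt_one {n : ℕ} (ha : a n = 0) :
    |futureTail α 1 ε (n + 1)| < 1 := by
  refine abs_lt_one_of_mul_eq_sq_mul_sub (by exact_mod_cast hb) (hε (n + 2)) (hε n) hc ?_
  have hn := h n
  rw [ha] at hn
  rw [futureTail]
  push_cast at hn ⊢
  linear_combination -hn - ε (n + 2) * hα

theorem IsDigitSequence.abs_pastTail_lt_one {n : ℕ} (ha : a n = 0) : |pastTail α ε n| < 1 := by
  refine abs_lt_one_of_mul_eq_sq_mul_sub (by exact_mod_cast hb) (hε n) (hε (n + 2)) hc ?_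
  have hn := h n
  rw [ha] at hn
  rw [pastTail]
  push_cast at hn ⊢
  linear_combination hn - ε n * hα

variable (hα₀ : 0 < α)
include hα₀

theorem IsDigitSequence.mul_tails_pos_and_neg {n : ℕ} (ha : a (n + 1) ≠ 0) :
    0 < futureTail α 1 ε (n + 1) * pastTail α ε (n + 1) ∧
      futureTail α 1 ε (n + 2) * pastTail α ε (n + 2) < 0 := by
  have hb' : (1 : ℝ) ≤ b := by exact_mod_cast hb
  have hα' : α ^ 2 = b * α + ((1 : ℤ) : ℝ) := by rw [hα, Int.cast_one]
  have hr₀ : 0 < α⁻¹ := inv_pos.2 hα₀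
  have hrb : α⁻¹ = α - b := inv_eq_sub_of_sq_eq hα₀ hα
  have hr : α⁻¹ * (1 + α⁻¹) ≤ 1 := by nlinarith
  have hcα := add_one_mul_lt_one_add_inv hα₀ hα hc
  have hcb := mul_sq_add_two_lt (zero_le_one.trans hb') hα₀ hα hc
  have hk : |(a (n + 1) : ℝ)| = 1 := by
    have hle := h.abs_digit_le_one hb hε hcb (n + 1)
    have hpos := abs_pos.2 ha
    exact_mod_cast (by omega : |a (n + 1)| = 1)
  have ha₀ : a n = 0 := (h.eq_zero_or_succ_eq_zero hb hε hcb n).resolve_right ha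
  have ha₂ : a (n + 2) = 0 := (h.eq_zero_or_succ_eq_zero hb hε hcb (n + 1)).resolve_left ha
  have hF : |futureTail α 1 ε (n + 2)| < 1 + α⁻¹ := by
    have hle := abs_futureTail_le (s := 1) hα₀.le hε (n + 2)
    rw [Int.cast_one, abs_one] at hle
    exact hle.trans_lt hcα
  have hG : |-pastTail α ε (n + 1)| < 1 + α⁻¹ := by
    rw [abs_neg]
    exact (abs_pastTail_le hα₀.le hε (n + 1)).trans_lt hcα
  obtain ⟨hF₁, hF₂⟩ := mul_pos_and_mul_neg_of_eq_add_mul hr₀ hr hk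
    (h.abs_futureTail_succ_lt_one hb hε hα hc ha₀) hF (h.futureTail_eq hα' hα₀.ne' (n + 1))
  obtain ⟨hG₂, hG₁⟩ := mul_pos_and_mul_neg_of_eq_add_mul hr₀ hr hk
    (h.abs_pastTail_lt_one hb hε hα hc ha₂) hG (by
      rw [h.pastTail_succ hα' (n + 1), hrb]
      ring)
  have hkk : (a (n + 1) : ℝ) * a (n + 1) = 1 := by rw [← abs_mul_abs_self, hk, one_mul]
  constructor <;> nlinarith [hkk]

theorem IsDigitSequence.exists_even_digits_eq_zero : ∃ m, ∀ k, a (m + 2 * k) = 0 := by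
  have hα' : α ^ 2 = b * α + ((1 : ℤ) : ℝ) := by rw [hα, Int.cast_one]
  refine exists_eq_zero_of_alternating_sign
    (P := fun n => futureTail α 1 ε n * pastTail α ε n) (fun n ha => ?_)
    fun n ha => h.mul_tails_pos_and_neg hb hε hα hc hα₀ ha
  simp only [h.futureTail_eq hα' hα₀.ne' n, h.pastTail_succ hα' n, ha, Int.cast_zero, zero_add]
  field_simp
  linear_combination -(futureTail α 1 ε (n + 1) * pastTail α ε n) * hα

-- From some index on, the digits at every other place vanish, so that eliminating the intermediate
-- errors leaves a digit sequence for `α ^ 2`, which has norm `1`.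
theorem IsDigitSequence.eventuallyPeriodic_of_norm_neg_one : EventuallyPeriodic a := by
  have hb' : (1 : ℝ) ≤ b := by exact_mod_cast hb
  obtain ⟨m, hm⟩ := h.exists_even_digits_eq_zero hb hε hα hc hα₀
  have hodd : IsDigitSequence (b ^ 2 + 2) (-1) (fun k => ε (m + 2 * k) / b)
      fun k => a (m + 2 * k + 1) := fun k => by
    have h₀ := h (m + 2 * k)
    have h₁ := h (m + 2 * k + 1)
    have h₂ := h (m + 2 * k + 2)
    rw [hm] at h₀
    rw [show a (m + 2 * k + 2) = 0 from hm (k + 1)] at h₂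
    simp only [mul_add, mul_one, Nat.reduceMul, ← add_assoc]
    field_simp
    push_cast at h₀ h₁ h₂ ⊢
    linear_combination h₂ - h₀ + b * h₁
  refine .of_shift m (.of_even_eq_of_odd hm (hodd.eventuallyPeriodic_of_norm_one (c := c / b)
    (β := α ^ 2) (by nlinarith) (by nlinarith) ?_ ?_ fun k => ?_))
  · push_cast
    linear_combination (α ^ 2 - 1 + b * α) * hα
  · rw [div_mul_eq_mul_div, div_lt_one (by linarith)]
    exact hc
  · rw [abs_div, abs_of_pos (by linarith : (0 : ℝ) < b)]
    exact div_le_div_of_nonneg_right (hε _) (by linarith)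

end NormNegOne

/-! ### Expansions of sparse words -/

/-- The gaps between consecutive letters `true` of the word tend to infinity. -/
def IsSparse (t : ℕ → Bool) : Prop :=
  ∀ L, ∀ᶠ n in atTop, t n = true → ∀ j < L, t (n + 1 + j) = false

theorem exists_isSparse_frequently_true :
    ∃ t : ℕ → Bool, IsSparse t ∧ ∃ᶠ n in atTop, t n = true := by
  refine ⟨fun n => decide n.isPowerOfTwo, fun L => ?_, frequently_atTop.2 fun N => ?_⟩
  · filter_upwards [eventually_gt_atTop L] with n hn ht j hj
    obtain ⟨k, rfl⟩ := of_decide_eq_true ht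
    refine decide_eq_false fun ⟨l, hl⟩ => ?_
    have hkl : k < l := (Nat.pow_lt_pow_iff_right one_lt_two).1 (by omega)
    have hpow : 2 ^ (k + 1) ≤ 2 ^ l := Nat.pow_le_pow_right two_pos hkl
    rw [pow_succ] at hpow
    omega
  · exact ⟨2 ^ N, Nat.lt_two_pow_self.le, decide_eq_true ⟨N, rfl⟩⟩

/-- The expansion of the letters of `t` from position `n` onwards in powers of `r`. -/
noncomputable def futureSum (t : ℕ → Bool) (r : ℝ) (n : ℕ) : ℝ :=
  ∑' j, ((t (n + j)).toInt : ℝ) * r ^ j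

/-- The expansion `∑ j < n, t (n - 1 - j) * r ^ j` of the letters of `t` before position `n`. -/
noncomputable def pastSum (t : ℕ → Bool) (r : ℝ) : ℕ → ℝ
  | 0 => 0
  | n + 1 => (t n).toInt + r * pastSum t r n

theorem toInt_mem_Icc (x : Bool) : (x.toInt : ℝ) ∈ Set.Icc 0 1 := by
  cases x <;> simp

section FutureSumPastSum

variable {t : ℕ → Bool} {r : ℝ}

theorem pastSum_add_of_eq_false {n l : ℕ} (h : ∀ j < l, t (n + j) = false) :
    pastSum t r (n + l) = r ^ l * pastSum t r n := by
  induction l with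
  | zero => simp
  | succ l ih =>
    rw [← add_assoc, pastSum, h l l.lt_succ_self, ih fun j hj => h j (hj.trans l.lt_succ_self),
      Bool.toInt_false]
    push_cast
    ring

variable (hr₀ : 0 ≤ r)
include hr₀

theorem pastSum_nonneg (n : ℕ) : 0 ≤ pastSum t r n := by
  induction n with
  | zero => exact le_rfl
  | succ n ih => exact add_nonneg (toInt_mem_Icc _).1 (mul_nonneg hr₀ ih)

theorem futureSum_nonneg (n : ℕ) : 0 ≤ futureSum t r n :=
  tsum_nonneg fun j => mul_nonneg (toInt_mem_Icc _).1 (pow_nonneg hr₀ j)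

variable (hr₁ : r < 1)
include hr₁

theorem pastSum_le (n : ℕ) : pastSum t r n ≤ (1 - r)⁻¹ := by
  have hr : 0 < 1 - r := sub_pos.2 hr₁
  induction n with
  | zero => exact (inv_pos.2 hr).le
  | succ n ih =>
    calc pastSum t r (n + 1) ≤ 1 + r * (1 - r)⁻¹ :=
          add_le_add (toInt_mem_Icc _).2 (mul_le_mul_of_nonneg_left ih hr₀)
      _ = (1 - r)⁻¹ := by
        field_simp
        ring

theorem summable_toInt_mul_pow (n : ℕ) : Summable fun j => ((t (n + j)).toInt : ℝ) * r ^ j :=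
  (summable_geometric_of_lt_one hr₀ hr₁).of_nonneg_of_le
    (fun j => mul_nonneg (toInt_mem_Icc _).1 (pow_nonneg hr₀ j))
    fun j => mul_le_of_le_one_left (pow_nonneg hr₀ j) (toInt_mem_Icc _).2

theorem futureSum_eq (n : ℕ) : futureSum t r n = (t n).toInt + r * futureSum t r (n + 1) := by
  rw [futureSum, (summable_toInt_mul_pow hr₀ hr₁ n).tsum_eq_zero_add, futureSum, ← tsum_mul_left]
  simp only [add_zero, pow_zero, mul_one, pow_succ, add_assoc, add_comm 1, mul_left_comm r,
    mul_comm r]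

theorem futureSum_le (n : ℕ) : futureSum t r n ≤ (1 - r)⁻¹ := by
  rw [← tsum_geometric_of_lt_one hr₀ hr₁]
  exact (summable_toInt_mul_pow hr₀ hr₁ n).tsum_le_tsum
    (fun j => mul_le_of_le_one_left (pow_nonneg hr₀ j) (toInt_mem_Icc _).2)
    (summable_geometric_of_lt_one hr₀ hr₁)

theorem futureSum_eq_of_eq_false {n l : ℕ} (h : ∀ j < l, t (n + j) = false) :
    futureSum t r n = r ^ l * futureSum t r (n + l) := by
  induction l with
  | zero => simp
  | succ l ih =>
    rw [ih fun j hj => h j (hj.trans l.lt_succ_self), futureSum_eq hr₀ hr₁ (n + l),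
      h l l.lt_succ_self, Bool.toInt_false, Int.cast_zero, zero_add, pow_succ, mul_assoc, add_assoc]

end FutureSumPastSum

theorem mul_le_one_of_le_inv {r x : ℝ} (hr₀ : 0 ≤ r) (hr₂ : r ≤ 1 / 2) (hx : x ≤ (1 - r)⁻¹) :
    r * x ≤ 1 := by
  calc r * x ≤ r * (1 - r)⁻¹ := mul_le_mul_of_nonneg_left hx hr₀
    _ ≤ 1 := by
      rw [← div_eq_mul_inv, div_le_one] <;> linarith

section SparseWord

variable {t : ℕ → Bool} {r : ℝ}

theorem futureSum_pos (hr₀ : 0 < r) (hr₁ : r < 1) (ht : ∃ᶠ n in atTop, t n = true) (n : ℕ) :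
    0 < futureSum t r n := by
  obtain ⟨m, hnm, hm⟩ := frequently_atTop.1 ht n
  refine (summable_toInt_mul_pow hr₀.le hr₁ n).tsum_pos
    (fun j => mul_nonneg (toInt_mem_Icc _).1 (pow_nonneg hr₀.le j)) (m - n) ?_
  rw [Nat.add_sub_cancel' hnm, hm, Bool.toInt_true, Int.cast_one, one_mul]
  exact pow_pos hr₀ _

theorem exists_futureSum_lt (hr₀ : 0 ≤ r) (hr₁ : r < 1) (hs : IsSparse t)
    (ht : ∃ᶠ n in atTop, t n = true) {δ : ℝ} (hδ : 0 < δ) : ∃ n, futureSum t r n < δ := by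
  have hr : 0 < 1 - r := sub_pos.2 hr₁
  obtain ⟨L, hL⟩ := exists_pow_lt_of_lt_one (mul_pos hδ hr) hr₁
  obtain ⟨n, hn, hrun⟩ := (ht.and_eventually (hs L)).exists
  refine ⟨n + 1, ?_⟩
  rw [futureSum_eq_of_eq_false hr₀ hr₁ (hrun hn)]
  calc r ^ L * futureSum t r (n + 1 + L) ≤ r ^ L * (1 - r)⁻¹ :=
        mul_le_mul_of_nonneg_left (futureSum_le hr₀ hr₁ _) (pow_nonneg hr₀ L)
    _ < δ := by rwa [← div_eq_mul_inv, div_lt_iff₀ hr]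

section Bounds

variable (hr₀ : 0 ≤ r) (hr₂ : r ≤ 1 / 2) (hs : IsSparse t) {C : ℝ} (hC : 1 < C)
include hr₀ hr₂ hs hC

theorem eventually_futureSum_le : ∀ᶠ n in atTop, futureSum t r n ≤ C := by
  have hr₁ : r < 1 := by linarith
  have hle : ∀ n, r * futureSum t r n ≤ 1 := fun n =>
    mul_le_one_of_le_inv hr₀ hr₂ (futureSum_le hr₀ hr₁ n)
  obtain ⟨L, hL⟩ := exists_pow_lt_of_lt_one (sub_pos.2 hC) hr₁
  filter_upwards [hs L] with n hn
  rw [futureSum_eq hr₀ hr₁]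
  rcases htn : t n with _ | _
  · simpa using (hle _).trans hC.le
  · rw [futureSum_eq_of_eq_false hr₀ hr₁ (hn htn), Bool.toInt_true, mul_left_comm]
    push_cast
    nlinarith [hle (n + 1 + L), pow_nonneg hr₀ L]

theorem eventually_pastSum_le : ∀ᶠ n in atTop, pastSum t r n ≤ C := by
  have hr₁ : r < 1 := by linarith
  have hle : ∀ n, r * pastSum t r n ≤ 1 := fun n =>
    mul_le_one_of_le_inv hr₀ hr₂ (pastSum_le hr₀ hr₁ n)
  obtain ⟨L, hL⟩ := exists_pow_lt_of_lt_one (sub_pos.2 hC) hr₁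
  obtain ⟨N, hN⟩ := eventually_atTop.1 (hs L)
  filter_upwards [eventually_ge_atTop (N + L + 1)] with n hn
  obtain ⟨k, rfl⟩ : ∃ k, n = k + L + 1 := ⟨n - L - 1, by omega⟩
  rw [pastSum]
  rcases htn : t (k + L) with _ | _
  · simpa using (hle _).trans hC.le
  · have hrun : ∀ j < L, t (k + j) = false := fun j hj => by
      by_contra hkj
      have hfalse := hN (k + j) (by omega) (eq_true_of_ne_false hkj) (L - 1 - j) (by omega)
      rw [show k + j + 1 + (L - 1 - j) = k + L by omega, htn] at hfalse
      exact Bool.noConfusion hfalse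
    rw [pastSum_add_of_eq_false hrun, Bool.toInt_true, mul_left_comm]
    push_cast
    nlinarith [hle k, pow_nonneg hr₀ L]

theorem eventually_abs_futureSum_sub_pastSum_le :
    ∀ᶠ n in atTop, |futureSum t r n - pastSum t r n| ≤ C := by
  filter_upwards [eventually_futureSum_le hr₀ hr₂ hs hC, eventually_pastSum_le hr₀ hr₂ hs hC]
    with n hF hP
  have hF₀ := futureSum_nonneg (t := t) hr₀ n
  have hP₀ := pastSum_nonneg (t := t) hr₀ n
  exact abs_le.2 ⟨by linarith, by linarith⟩

end Bounds

end SparseWord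

/-! ### An extremal number for norm `1` -/

open Polynomial in
theorem exists_eq_add_mul_of_mem_adjoin {b s : ℚ} {α ξ : ℝ} (hα : α ^ 2 = b * α + s)
    (hξ : ξ ∈ ℚ⟮α⟯) : ∃ x y : ℚ, ξ = x + y * α := by
  set f : ℚ[X] := X ^ 2 - (C b * X + C s) with hf_def
  have hf : f.Monic := monic_X_pow_sub degree_linear_lt
  have hf_deg : f.natDegree = 2 := by
    rw [hf_def]
    compute_degree!
  have hroot : aeval α f = 0 := by simp [hf_def, hα]
  rw [← mem_toSubalgebra, adjoin_simple_toSubalgebra_of_isAlgebraic ⟨f, hf.ne_zero, hroot⟩,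
    Algebra.adjoin_singleton_eq_range_aeval] at hξ
  obtain ⟨p, rfl⟩ := hξ
  have hlt : (p %ₘ f).natDegree < 2 :=
    hf_deg ▸ natDegree_modByMonic_lt p hf fun hone => by simp [hone] at hf_deg
  obtain ⟨y, x, hxy⟩ := exists_eq_X_add_C_of_natDegree_le_one (Nat.lt_succ_iff.1 hlt)
  refine ⟨x, y, ?_⟩
  calc aeval α p = aeval α (p %ₘ f) := (aeval_modByMonic_eq_self_of_root hroot).symm
    _ = x + y * α := by simp [hxy, add_comm]

theorem exists_int_mul_eq_of_mem_adjoin {b s : ℚ} {α ξ : ℝ} (hα : α ^ 2 = b * α + s)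
    (hξ : ξ ∈ ℚ⟮α⟯) : ∃ q : ℤ, 0 < q ∧ ∃ X Y : ℤ, q * ξ = X + Y * α := by
  obtain ⟨x, y, rfl⟩ := exists_eq_add_mul_of_mem_adjoin hα hξ
  refine ⟨x.den * y.den, by exact_mod_cast mul_pos x.pos y.pos, x.num * y.den, x.den * y.num, ?_⟩
  rw [Rat.cast_def x, Rat.cast_def y]
  have hx : (x.den : ℝ) ≠ 0 := by exact_mod_cast x.den_ne_zero
  have hy : (y.den : ℝ) ≠ 0 := by exact_mod_cast y.den_ne_zero
  push_cast
  field_simp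

section NormOne

variable {B : ℤ} {β : ℝ} (hβ₁ : 1 < β) (hβ : β ^ 2 = B * β - 1)
include hβ₁ hβ

theorem inv_add_self_of_sq_eq : β⁻¹ + β = B := by
  have hβ₀ : β ≠ 0 := (zero_lt_one.trans hβ₁).ne'
  field_simp
  linarith

theorem exists_futureSum_mul_pow_sub_eq (t : ℕ → Bool) (n : ℕ) :
    ∃ u : ℤ, futureSum t β⁻¹ 0 * β ^ n - (futureSum t β⁻¹ n - pastSum t β⁻¹ n) = (1 + β) * u := by
  have hβ₀ : 0 < β := zero_lt_one.trans hβ₁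
  have hrβ := inv_mul_cancel₀ hβ₀.ne'
  have hrB := inv_add_self_of_sq_eq hβ₁ hβ
  have hstep := futureSum_eq (t := t) (inv_pos.2 hβ₀).le (inv_lt_one_of_one_lt₀ hβ₁)
  have hnext : ∀ n, futureSum t β⁻¹ (n + 1) = β * (futureSum t β⁻¹ n - (t n).toInt) := fun n => by
    rw [hstep n]
    field_simp
    ring
  induction n using Nat.twoStepInduction with
  | zero => exact ⟨0, by simp [pastSum]⟩
  | one =>
    refine ⟨(t 0).toInt, ?_⟩
    rw [hnext 0, pastSum, pastSum]
    ring
  | more n ih ih' =>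
    obtain ⟨u, hu⟩ := ih
    obtain ⟨u', hu'⟩ := ih'
    refine ⟨B * u' - u + (t (n + 1)).toInt - (t n).toInt, ?_⟩
    rw [hnext n, pastSum] at hu'
    rw [hnext (n + 1), hnext n, pastSum, pastSum]
    push_cast
    linear_combination B * hu' - hu + (futureSum t β⁻¹ 0 * β ^ n - futureSum t β⁻¹ n +
      (t n).toInt) * hβ + (β⁻¹ * pastSum t β⁻¹ n + (t n).toInt) * hrB - pastSum t β⁻¹ n * hrβ

variable (hB : 3 ≤ B)
include hB

theorem inv_le_half : β⁻¹ ≤ 1 / 2 := by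
  have hB' : (3 : ℝ) ≤ B := by exact_mod_cast hB
  rw [inv_le_comm₀ (by linarith) (by norm_num)]
  nlinarith

-- The norm of `X + Y * β` is a nonzero integer.
theorem one_le_mul_abs_conj {X Y : ℤ} (h₀ : 0 < X + Y * β) (h₁ : X + Y * β < 1) :
    1 ≤ (X + Y * β) * |X + Y * β⁻¹| := by
  have hβ₀ : 0 < β := zero_lt_one.trans hβ₁
  have hr := inv_le_half hβ₁ hβ hB
  have hrB := inv_add_self_of_sq_eq hβ₁ hβ
  have hnorm : (X + Y * β) * (X + Y * β⁻¹) = ((X ^ 2 + B * X * Y + Y ^ 2 : ℤ) : ℝ) := by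
    push_cast
    linear_combination X * Y * hrB + Y ^ 2 * mul_inv_cancel₀ hβ₀.ne'
  have hconj : (X + Y * β⁻¹ : ℝ) ≠ 0 := fun hzero => by
    have hB' : (3 : ℝ) ≤ B := by exact_mod_cast hB
    have hY : X + Y * β = Y * (β - β⁻¹) := by linear_combination hzero
    have hY₀ : (0 : ℝ) < Y := pos_of_mul_pos_left (hY ▸ h₀) (by linarith)
    have hY₁ : (1 : ℝ) ≤ Y := by exact_mod_cast hY₀
    nlinarith
  have hne : X ^ 2 + B * X * Y + Y ^ 2 ≠ 0 := by
    rw [← Int.cast_ne_zero (α := ℝ), ← hnorm]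
    exact mul_ne_zero h₀.ne' hconj
  calc (1 : ℝ) ≤ |((X ^ 2 + B * X * Y + Y ^ 2 : ℤ) : ℝ)| := by exact_mod_cast Int.one_le_abs hne
    _ = (X + Y * β) * |X + Y * β⁻¹| := by rw [← hnorm, abs_mul, abs_of_pos h₀]

theorem exists_mul_futureSum_eq {t : ℕ → Bool} {q X₀ Y₀ : ℤ} (hq : 0 < q)
    (h₀ : q * futureSum t β⁻¹ 0 = X₀ + Y₀ * β) (n : ℕ) :
    ∃ X Y : ℤ, q * futureSum t β⁻¹ n = X + Y * β ∧
      |X + Y * β⁻¹| ≤ max |X₀ + Y₀ * β⁻¹| q := by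
  have hβ₀ : 0 < β := zero_lt_one.trans hβ₁
  have hq' : (0 : ℝ) < q := by exact_mod_cast hq
  induction n with
  | zero => exact ⟨X₀, Y₀, h₀, le_max_left _ _⟩
  | succ n ih =>
    obtain ⟨X, Y, heq, hle⟩ := ih
    have hr := inv_le_half hβ₁ hβ hB
    have hr₀ := inv_pos.2 hβ₀
    have hrB := inv_add_self_of_sq_eq hβ₁ hβ
    have hrβ := inv_mul_cancel₀ hβ₀.ne'
    have hstep := futureSum_eq (t := t) hr₀.le (by linarith) n
    refine ⟨-Y, X - q * (t n).toInt + B * Y, ?_, ?_⟩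
    · rw [hstep] at heq
      push_cast
      linear_combination β * heq + Y * hβ - q * futureSum t β⁻¹ (n + 1) * hrβ
    · have hconj : ((-Y : ℤ) : ℝ) + ((X - q * (t n).toInt + B * Y : ℤ) : ℝ) * β⁻¹ =
          β⁻¹ * ((X + Y * β⁻¹) - q * (t n).toInt) := by
        push_cast
        linear_combination Y * hrβ - Y * β⁻¹ * hrB
      have hqt : |(q : ℝ) * (t n).toInt| ≤ q := by
        rw [abs_of_nonneg (mul_nonneg hq'.le (toInt_mem_Icc _).1)]
        exact mul_le_of_le_one_right hq'.le (toInt_mem_Icc _).2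
      rw [hconj, abs_mul, abs_of_pos hr₀]
      have habs := abs_sub (X + Y * β⁻¹ : ℝ) (q * (t n).toInt)
      have hmax := le_max_right |(X₀ + Y₀ * β⁻¹ : ℝ)| q
      nlinarith

theorem futureSum_notMem_adjoin {t : ℕ → Bool} (hs : IsSparse t)
    (ht : ∃ᶠ n in atTop, t n = true) : futureSum t β⁻¹ 0 ∉ ℚ⟮β⟯ := fun hmem => by
  have hβ₀ : 0 < β := zero_lt_one.trans hβ₁
  have hr₀ := inv_pos.2 hβ₀
  have hr₁ := inv_lt_one_of_one_lt₀ hβ₁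
  obtain ⟨q, hq, X₀, Y₀, h₀⟩ := exists_int_mul_eq_of_mem_adjoin (b := B) (s := -1)
    (by rw [hβ]; push_cast; ring) hmem
  have hq' : (1 : ℝ) ≤ q := by exact_mod_cast hq
  set M : ℝ := max |X₀ + Y₀ * β⁻¹| q
  have hqM : (q : ℝ) ≤ M := le_max_right _ _
  have hqM₀ : 0 < q * M := mul_pos (by linarith) (by linarith)
  obtain ⟨n, hn⟩ := exists_futureSum_lt hr₀.le hr₁ hs ht (one_div_pos.2 hqM₀)
  rw [lt_div_iff₀ hqM₀] at hn
  have hpos : 0 < q * futureSum t β⁻¹ n :=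
    mul_pos (by linarith) (futureSum_pos hr₀ hr₁ ht n)
  have hlt : q * futureSum t β⁻¹ n < 1 := by nlinarith
  obtain ⟨X, Y, heq, hle⟩ := exists_mul_futureSum_eq hβ₁ hβ hB hq h₀ n
  have hnorm := one_le_mul_abs_conj hβ₁ hβ hB (heq ▸ hpos) (heq ▸ hlt)
  rw [← heq] at hnorm
  have hle' := mul_le_mul_of_nonneg_left hle hpos.le
  linarith

theorem exists_notMem_adjoin_abs_mul_le :
    ∃ ξ ∉ ℚ⟮β⟯, ∃ u : ℕ → ℤ, ∀ C > 1, ∀ᶠ n in atTop, |ξ * β ^ n - u n| * (1 + β) ≤ C := by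
  have hβ₀ : 0 < β := zero_lt_one.trans hβ₁
  have hβ' : 0 < 1 + β := by linarith
  obtain ⟨t, hs, ht⟩ := exists_isSparse_frequently_true
  choose u hu using exists_futureSum_mul_pow_sub_eq hβ₁ hβ t
  refine ⟨futureSum t β⁻¹ 0 / (1 + β), fun hmem => ?_, u, fun C hC => ?_⟩
  · refine futureSum_notMem_adjoin hβ₁ hβ hB hs ht ?_
    rw [← div_mul_cancel₀ (futureSum t β⁻¹ 0) hβ'.ne']
    exact mul_mem hmem (add_mem (one_mem _) (mem_adjoin_simple_self ℚ β))
  · filter_upwards [eventually_abs_futureSum_sub_pastSum_le (inv_pos.2 hβ₀).le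
      (inv_le_half hβ₁ hβ hB) hs hC] with n hn
    refine le_of_eq_of_le ?_ hn
    rw [← abs_of_pos hβ', ← abs_mul, abs_of_pos hβ']
    congr 1
    rw [sub_mul, mul_right_comm, div_mul_cancel₀ _ hβ'.ne']
    linear_combination hu n

end NormOne

/-! ### The least upper limit -/

/-- The set of values of `limsup ‖ξ * α ^ n‖` for `ξ` outside `ℚ⟮α⟯`. -/
def limsupSpectrum (α : ℝ) : Set ℝ :=
  {l | ∃ ξ : ℝ, ξ ∉ ℚ⟮α⟯ ∧ limsupDist α ξ = l}

theorem isLeast_limsupSpectrum {α ξ e : ℝ} (hξ : ξ ∉ ℚ⟮α⟯) (hle : limsupDist α ξ ≤ e)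
    (hge : ∀ ζ ∉ ℚ⟮α⟯, e ≤ limsupDist α ζ) : IsLeast (limsupSpectrum α) e :=
  ⟨⟨ξ, hξ, hle.antisymm (hge ξ hξ)⟩, fun _ ⟨ζ, hζ, hl⟩ => hl ▸ hge ζ hζ⟩

theorem isLeast_limsupSpectrum_of_norm_one {b : ℤ} {α : ℝ} (hb : 3 ≤ b) (hα₁ : 1 < α)
    (hα : α ^ 2 = b * α - 1) : IsLeast (limsupSpectrum α) (1 / (1 + α)) := by
  have hα₀ : 0 < 1 + α := by linarith
  have hα' : α ^ 2 = b * α + ((-1 : ℤ) : ℝ) := by rw [hα]; push_cast; ring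
  obtain ⟨ξ, hξ, u, hu⟩ := exists_notMem_adjoin_abs_mul_le hα₁ hα hb
  refine isLeast_limsupSpectrum hξ (limsupDist_le fun c hc => ?_) fun ζ hζ =>
    le_limsupDist hα' hα₁ (by push_cast; nlinarith) (fun c hc ε a h hε => ?_) hζ
  · filter_upwards [hu (c * (1 + α)) ((div_lt_iff₀ hα₀).1 hc)] with n hn
    exact ⟨u n, le_of_mul_le_mul_right hn hα₀⟩
  · exact h.eventuallyPeriodic_of_norm_one hb hα₁ hα ((lt_div_iff₀ hα₀).1 hc) hε

theorem adjoin_le_adjoin_sq {b s : ℤ} {α : ℝ} (hb : b ≠ 0) (hα : α ^ 2 = b * α + s) :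
    ℚ⟮α⟯ ≤ ℚ⟮α ^ 2⟯ := by
  have hb₀ : (b : ℝ) ≠ 0 := by exact_mod_cast hb
  have hmem : (α ^ 2 - s) / b ∈ ℚ⟮α ^ 2⟯ :=
    div_mem (sub_mem (mem_adjoin_simple_self ℚ (α ^ 2)) (intCast_mem _ s)) (intCast_mem _ b)
  have hα_eq : (α ^ 2 - s) / b = α := by
    field_simp
    linarith
  rw [hα_eq] at hmem
  exact adjoin_simple_le_iff.2 hmem

section NormNegOne

variable {b : ℤ} {α : ℝ} (hb : 2 ≤ b) (hα₀ : 0 < α) (hα : α ^ 2 = b * α + 1)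
include hb hα

-- Odd powers are reduced to even ones by `b * α ^ (2 * m + 1) = α ^ (2 * (m + 1)) - α ^ (2 * m)`.
theorem exists_abs_mul_mul_pow_sub_le {ξ δ : ℝ} {u : ℕ → ℤ} {N n : ℕ}
    (hu : ∀ m ≥ N, |ξ * (α ^ 2) ^ m - u m| ≤ δ) (hn : 2 * N ≤ n) :
    ∃ v : ℤ, |b * ξ * α ^ n - v| ≤ b * δ := by
  have hb' : (2 : ℝ) ≤ b := by exact_mod_cast hb
  have hδ : 0 ≤ δ := (abs_nonneg _).trans (hu N le_rfl)
  obtain ⟨m, rfl | rfl⟩ := Nat.even_or_odd' n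
  · have herr : b * ξ * α ^ (2 * m) - (b * u m : ℤ) = b * (ξ * (α ^ 2) ^ m - u m) := by
      push_cast
      ring
    refine ⟨b * u m, ?_⟩
    rw [herr, abs_mul, abs_of_pos (by linarith)]
    exact mul_le_mul_of_nonneg_left (hu m (by omega)) (by linarith)
  · have herr : b * ξ * α ^ (2 * m + 1) - (u (m + 1) - u m : ℤ) =
        (ξ * (α ^ 2) ^ (m + 1) - u (m + 1)) - (ξ * (α ^ 2) ^ m - u m) := by
      push_cast
      linear_combination -ξ * (α ^ 2) ^ m * hα
    refine ⟨u (m + 1) - u m, ?_⟩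
    rw [herr]
    calc _ ≤ δ + δ := (abs_sub _ _).trans (add_le_add (hu _ (by omega)) (hu _ (by omega)))
      _ = 2 * δ := (two_mul δ).symm
      _ ≤ b * δ := mul_le_mul_of_nonneg_right hb' hδ

include hα₀

theorem exists_notMem_adjoin_limsupDist_le : ∃ ξ ∉ ℚ⟮α⟯, limsupDist α ξ ≤ b / (1 + α ^ 2) := by
  have hb' : (2 : ℝ) ≤ b := by exact_mod_cast hb
  have hα₁ : 0 < 1 + α ^ 2 := by positivity
  obtain ⟨ξ, hξ, u, hu⟩ := exists_notMem_adjoin_abs_mul_le (B := b ^ 2 + 2) (β := α ^ 2)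
    (by nlinarith) (by push_cast; linear_combination (α ^ 2 - 1 + b * α) * hα) (by nlinarith)
  refine ⟨b * ξ, fun hmem => hξ (adjoin_le_adjoin_sq (b := b) (s := 1) (by omega)
    (by rw [hα, Int.cast_one]) ?_), limsupDist_le fun c hc => ?_⟩
  · rw [← mul_div_cancel_left₀ ξ (by linarith : (b : ℝ) ≠ 0)]
    exact div_mem hmem (intCast_mem _ b)
  have hC : 1 < c / b * (1 + α ^ 2) := by
    rwa [div_mul_eq_mul_div, one_lt_div (by linarith), ← div_lt_iff₀ hα₁]
  obtain ⟨N, hN⟩ := eventually_atTop.1 (hu _ hC)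
  filter_upwards [eventually_ge_atTop (2 * N)] with n hn
  obtain ⟨v, hv⟩ := exists_abs_mul_mul_pow_sub_le hb hα
    (fun m hm => le_of_mul_le_mul_right (hN m hm) hα₁) hn
  exact ⟨v, hv.trans_eq (mul_div_cancel₀ c (by linarith))⟩

theorem isLeast_limsupSpectrum_of_norm_neg_one :
    IsLeast (limsupSpectrum α) (b / (1 + α ^ 2)) := by
  have hb' : (2 : ℝ) ≤ b := by exact_mod_cast hb
  have hα' : α ^ 2 = b * α + ((1 : ℤ) : ℝ) := by rw [hα, Int.cast_one]
  have hα₁ : 0 < 1 + α ^ 2 := by positivity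
  obtain ⟨ξ, hξ, hle⟩ := exists_notMem_adjoin_limsupDist_le hb hα₀ hα
  refine isLeast_limsupSpectrum hξ hle fun ζ hζ => le_limsupDist hα' (by nlinarith)
    (by push_cast; positivity) (fun c hc ε a h hε => ?_) hζ
  exact h.eventuallyPeriodic_of_norm_neg_one (by omega) hε hα ((lt_div_iff₀ hα₁).1 hc) hα₀

end NormNegOne

theorem stmt8_general (b : ℤ) (α : ℝ) :
    (3 ≤ b → α = ((b : ℝ) + Real.sqrt ((b : ℝ) ^ 2 - 4)) / 2 →
      IsLeast (limsupSpectrum α) (1 / (1 + α))) ∧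
    (2 ≤ b → α = ((b : ℝ) + Real.sqrt ((b : ℝ) ^ 2 + 4)) / 2 →
      IsLeast (limsupSpectrum α) ((b : ℝ) / (1 + α ^ 2))) := by
  refine ⟨fun hb hα => ?_, fun hb hα => ?_⟩
  · have hb' : (3 : ℝ) ≤ b := by exact_mod_cast hb
    have hsq := Real.sq_sqrt (by nlinarith : (0 : ℝ) ≤ (b : ℝ) ^ 2 - 4)
    have hpos := Real.sqrt_nonneg ((b : ℝ) ^ 2 - 4)
    exact isLeast_limsupSpectrum_of_norm_one hb (by linarith) (by rw [hα]; linarith)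
  · have hb' : (2 : ℝ) ≤ b := by exact_mod_cast hb
    have hsq := Real.sq_sqrt (by positivity : (0 : ℝ) ≤ (b : ℝ) ^ 2 + 4)
    have hpos := Real.sqrt_nonneg ((b : ℝ) ^ 2 + 4)
    exact isLeast_limsupSpectrum_of_norm_neg_one hb (by linarith) (by rw [hα]; linarith)

theorem stmt8 (b : ℤ) (α : ℝ) :
    (4 ≤ b → α = ((b : ℝ) + Real.sqrt ((b : ℝ) ^ 2 - 4)) / 2 →
      sInf {l : ℝ | ∃ ξ : ℝ,
          ξ ∉ IntermediateField.adjoin ℚ ({α} : Set ℝ) ∧ limsupDist α ξ = l} =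
        1 / (1 + α)) ∧
    (3 ≤ b → α = ((b : ℝ) + Real.sqrt ((b : ℝ) ^ 2 + 4)) / 2 →
      sInf {l : ℝ | ∃ ξ : ℝ,
          ξ ∉ IntermediateField.adjoin ℚ ({α} : Set ℝ) ∧ limsupDist α ξ = l} =
        (b : ℝ) / (1 + α ^ 2)) := by
  obtain ⟨hone, hnegone⟩ := stmt8_general b α
  exact ⟨fun hb hα => (hone (by omega) hα).csInf_eq, fun hb hα => (hnegone (by omega) hα).csInf_eq⟩
end

section
/- Let x ∈ X_F and suppose that for some integers a, b ≥ 0 the word 1 0^a 1 0^b 1 is a factor of x. Then |a − b| ≤ 1. -/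
/-- `u` occurs as a block of consecutive letters of the bi-infinite word `x : ℤ → Bool`. -/
def IsFactorZ (u : List Bool) (x : ℤ → Bool) : Prop :=
  ∃ i : ℤ, ∀ k : ℕ, k < u.length → x (i + k) = u.getD k false

/-- `u` occurs as a block of consecutive letters of the right-infinite word `y : ℕ → Bool`. -/
def IsFactorN (u : List Bool) (y : ℕ → Bool) : Prop :=
  ∃ i : ℕ, ∀ k : ℕ, k < u.length → y (i + k) = u.getD k false

/-- The forbidden word `0v01ṽ1` (with `0 = false`, `1 = true`). -/
def forbidden1 (v : List Bool) : List Bool :=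
  [false] ++ v ++ [false, true] ++ v.reverse ++ [true]

/-- The forbidden word `1v10ṽ0` (with `0 = false`, `1 = true`). -/
def forbidden2 (v : List Bool) : List Bool :=
  [true] ++ v ++ [true, false] ++ v.reverse ++ [false]

/-- Membership in the subshift `X_F`: no factor of `x` lies in `F`. -/
def memXF (x : ℤ → Bool) : Prop :=
  ∀ v : List Bool, ¬ IsFactorZ (forbidden1 v) x ∧ ¬ IsFactorZ (forbidden2 v) x

/-- Membership in the one-sided subshift `Y_F`: no factor of `y` lies in `F`. -/
def memYF (y : ℕ → Bool) : Prop :=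
  ∀ v : List Bool, ¬ IsFactorN (forbidden1 v) y ∧ ¬ IsFactorN (forbidden2 v) y

/-- A finite word is balanced if any two factors of equal length have numbers of
occurrences of `1` differing by at most one. -/
def BalancedL (w : List Bool) : Prop :=
  ∀ u v : List Bool, u <:+: w → v <:+: w → u.length = v.length →
    |(u.count true : ℤ) - (v.count true : ℤ)| ≤ 1

/-- A right-infinite word is balanced if any two factors of equal length have numbers of
occurrences of `1` differing by at most one. -/
def BalancedN (y : ℕ → Bool) : Prop :=
  ∀ u v : List Bool, IsFactorN u y → IsFactorN v y → u.length = v.length →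
    |(u.count true : ℤ) - (v.count true : ℤ)| ≤ 1

/-- A bi-infinite word is balanced if any two factors of equal length have numbers of
occurrences of `1` differing by at most one. -/
def BalancedZ (x : ℤ → Bool) : Prop :=
  ∀ u v : List Bool, IsFactorZ u x → IsFactorZ v x → u.length = v.length →
    |(u.count true : ℤ) - (v.count true : ℤ)| ≤ 1

/-!
If `a ≥ b + 2`, then the suffix `0 0^b 0 1 0^b 1` of `1 0^a 1 0^b 1` is the forbidden word
`0v01ṽ1` with `v = 0^b`; if `b ≥ a + 2`, then its prefix `1 0^a 1 0 0^a 0` is the forbidden word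
`1v10ṽ0` with `v = 0^a`.
-/

theorem IsFactorZ.of_infix {u w : List Bool} {x : ℤ → Bool} (hw : IsFactorZ w x)
    (huw : u <:+: w) : IsFactorZ u x := by
  obtain ⟨p, s, rfl⟩ := huw
  obtain ⟨i, hi⟩ := hw
  refine ⟨i + p.length, fun k hk => ?_⟩
  calc x (i + p.length + k) = x (i + (p.length + k : ℕ)) := by rw [Nat.cast_add, add_assoc]
    _ = (p ++ u ++ s).getD (p.length + k) false := hi _ (by simp only [List.length_append]; omega)
    _ = (u ++ s).getD k false := by
      rw [List.append_assoc, List.getD_append_right _ _ _ _ (by omega), Nat.add_sub_cancel_left]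
    _ = u.getD k false := List.getD_append _ _ _ _ hk

theorem forbidden1_replicate_false (n : ℕ) :
    forbidden1 (List.replicate n false) =
      List.replicate (n + 2) false ++ [true] ++ List.replicate n false ++ [true] := by
  rw [List.replicate_succ, List.replicate_succ']
  simp [forbidden1]

theorem forbidden2_replicate_false (n : ℕ) :
    forbidden2 (List.replicate n false) =
      [true] ++ List.replicate n false ++ [true] ++ List.replicate (n + 2) false := by
  rw [List.replicate_succ, List.replicate_succ']
  simp [forbidden2]

namespace memXF

variable {x : ℤ → Bool} {a b : ℕ}

theorem le_add_one_of_isFactorZ_zeros_one_zeros_one (hx : memXF x)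
    (h : IsFactorZ (List.replicate a false ++ [true] ++ List.replicate b false ++ [true]) x) :
    a ≤ b + 1 := by
  by_contra! hab
  obtain ⟨c, rfl⟩ : ∃ c, a = c + (b + 2) := Nat.exists_eq_add_of_le' hab
  have hsuffix : forbidden1 (List.replicate b false) <:+
      List.replicate (c + (b + 2)) false ++ [true] ++ List.replicate b false ++ [true] :=
    ⟨List.replicate c false, by
      simp only [forbidden1_replicate_false, List.replicate_add c, List.append_assoc]⟩
  exact (hx _).1 (h.of_infix hsuffix.isInfix)

theorem le_add_one_of_isFactorZ_one_zeros_one_zeros (hx : memXF x)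
    (h : IsFactorZ ([true] ++ List.replicate a false ++ [true] ++ List.replicate b false) x) :
    b ≤ a + 1 := by
  by_contra! hab
  obtain ⟨c, rfl⟩ : ∃ c, b = a + 2 + c := Nat.exists_eq_add_of_le hab
  have hprefix : forbidden2 (List.replicate a false) <+:
      [true] ++ List.replicate a false ++ [true] ++ List.replicate (a + 2 + c) false :=
    ⟨List.replicate c false, by
      simp only [forbidden2_replicate_false, List.replicate_add _ c, List.append_assoc]⟩
  exact (hx _).2 (h.of_infix hprefix.isInfix)

end memXF

theorem stmt9 (x : ℤ → Bool) (hx : memXF x) (a b : ℕ)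
    (hfac : IsFactorZ
      ([true] ++ List.replicate a false ++ [true] ++ List.replicate b false ++ [true]) x) :
    |(a : ℤ) - (b : ℤ)| ≤ 1 := by
  have hab : a ≤ b + 1 := hx.le_add_one_of_isFactorZ_zeros_one_zeros_one
    (hfac.of_infix ⟨[true], [], by simp⟩)
  have hba : b ≤ a + 1 := hx.le_add_one_of_isFactorZ_one_zeros_one_zeros
    (hfac.of_infix (List.prefix_append _ _).isInfix)
  rw [abs_le]
  omega
end

section
/- Let x = (x_i)_{i∈ℤ} ∈ X_F, let a ≥ 1 and n ≥ 0 be integers, and suppose that for some indices i ≤ j the block x_i x_{i+1} … x_j equals (10^a)^n 1 0^{a+1} 1 0^a 1 (0^a 1)^n or equals (10^{a+1})^n 1 0^a 1 0^{a+1} 1 (0^{a+1} 1)^n. Then x_{i−a} = x_{i−a+1} = … = x_{i−1} = 0 and x_{j+1} = x_{j+2} = … = x_{j+a} = 0, while the block x_{i−a−2} … x_{i−1} is not equal to 0^{a+2} and the block x_{j+1} … x_{j+a+2} is not equal to 0^{a+2}. -/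
/-- The word `(10^a)^n 1 0^{a+1} 1 0^a 1 (0^a 1)^n`. -/
def wordA (a n : ℕ) : List Bool :=
  List.flatten (List.replicate n ([true] ++ List.replicate a false)) ++
    [true] ++ List.replicate (a + 1) false ++ [true] ++ List.replicate a false ++ [true] ++
    List.flatten (List.replicate n (List.replicate a false ++ [true]))

/-- The word `(10^{a+1})^n 1 0^a 1 0^{a+1} 1 (0^{a+1} 1)^n`. -/
def wordB (a n : ℕ) : List Bool :=
  List.flatten (List.replicate n ([true] ++ List.replicate (a + 1) false)) ++
    [true] ++ List.replicate a false ++ [true] ++ List.replicate (a + 1) false ++ [true] ++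
    List.flatten (List.replicate n (List.replicate (a + 1) false ++ [true]))

/-!
Around a cut `c | c̄` of a word of `X_F`, read the letters outwards in both directions. At the
first disagreement the left reading cannot show `c` against `c̄` on the right, since that would
be a word of `F`; so it shows `c̄` against `c`. Hence if `ṽ c c̄ v` occurs, a run of `c` to its left
forces a run of `c` to its right, and a run of `c̄` to its right forces a run of `c̄` to its left.

Both words of the theorem have the form `ṽ c c̄ v`, with `c = 0` for `wordA` and `c = 1` for
`wordB`, so a run of zeros is transferred from left to right by `wordA` and from right to left
by `wordB`. This leaves one end of each word, where other cuts of the same word apply.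
-/

section Occurrences

variable {x : ℤ → Bool} {p : ℤ} {c : Bool} {u v : List Bool} {m : ℕ}

/-- The word `u` occurs in the bi-infinite word `x` at position `p`, so that `IsFactorZ u x` is
by definition `∃ p, OccursAt x p u`. -/
def OccursAt (x : ℤ → Bool) (p : ℤ) (u : List Bool) : Prop :=
  ∀ k : ℕ, k < u.length → x (p + k) = u.getD k false

theorem occursAt_append :
    OccursAt x p (u ++ v) ↔ OccursAt x p u ∧ OccursAt x (p + u.length) v := by
  refine ⟨fun h => ⟨fun k hk => ?_, fun k hk => ?_⟩, fun ⟨hu, hv⟩ k hk => ?_⟩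
  · rw [h k (by rw [List.length_append]; omega), List.getD_append _ _ _ _ hk]
  · rw [add_assoc, ← Nat.cast_add, h _ (by simpa using hk),
      List.getD_append_right _ _ _ _ (by omega), Nat.add_sub_cancel_left]
  · rcases lt_or_ge k u.length with hlt | hge
    · rw [hu k hlt, List.getD_append _ _ _ _ hlt]
    · obtain ⟨l, rfl⟩ := Nat.exists_eq_add_of_le hge
      rw [Nat.cast_add, ← add_assoc, hv l (by simpa using hk),
        List.getD_append_right _ _ _ _ hge, Nat.add_sub_cancel_left]

theorem occursAt_sub_append :
    OccursAt x (p - u.length) (u ++ v) ↔ OccursAt x (p - u.length) u ∧ OccursAt x p v := by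
  rw [occursAt_append, sub_add_cancel]

theorem occursAt_singleton : OccursAt x p [c] ↔ x p = c := by
  simp [OccursAt]

theorem occursAt_replicate :
    OccursAt x p (List.replicate m c) ↔ ∀ k < m, x (p + k) = c := by
  simp +contextual [OccursAt]

theorem occursAt_add_one_replicate :
    OccursAt x (p + 1) (List.replicate m c) ↔ ∀ k : ℕ, 1 ≤ k → k ≤ m → x (p + k) = c := by
  rw [occursAt_replicate]
  refine ⟨fun h k hk hkm => ?_, fun h k hk => ?_⟩
  · rw [← h (k - 1) (by omega)]; congr 1; omega
  · rw [← h (k + 1) (by omega) hk]; congr 1; omega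

theorem occursAt_sub_replicate :
    OccursAt x (p - m) (List.replicate m c) ↔ ∀ k : ℕ, 1 ≤ k → k ≤ m → x (p - k) = c := by
  rw [occursAt_replicate]
  refine ⟨fun h k hk hkm => ?_, fun h k hk => ?_⟩
  · rw [← h (m - k) (by omega)]; congr 1; omega
  · rw [← h (m - k) (by omega) (by omega)]; congr 1; omega

end Occurrences

section CutWords

variable {x : ℤ → Bool} {p : ℤ} {c d : Bool} {u v : List Bool} {m : ℕ}

/-- The word `ṽ c c̄ v`, where `c̄` is the other letter: a cut `c | c̄` together with the region
around it in which the readings to the left and to the right agree. The words of `F` are the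
words `c (ṽ c c̄ v) c̄`. -/
def cutWord (c : Bool) (v : List Bool) : List Bool :=
  v.reverse ++ [c, !c] ++ v

theorem cutWord_append : cutWord c (v ++ u) = u.reverse ++ cutWord c v ++ u := by
  simp [cutWord]

theorem length_cutWord_append :
    (cutWord c (v ++ u)).length = (cutWord c v).length + 2 * u.length := by
  simp only [cutWord_append, List.length_append, List.length_reverse]
  ring

theorem memXF.not_occursAt_flanked_cutWord (hx : memXF x) :
    ¬ OccursAt x p ([c] ++ cutWord c v ++ [!c]) := by
  intro h
  cases c
  · exact (hx v.reverse).1 ⟨p, by simpa [OccursAt, forbidden1, cutWord] using h⟩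
  · exact (hx v.reverse).2 ⟨p, by simpa [OccursAt, forbidden2, cutWord] using h⟩

theorem OccursAt.cutWord_concat (hw : OccursAt x p (cutWord c v)) (hl : x (p - 1) = d)
    (hr : x (p + (cutWord c v).length) = d) :
    OccursAt x (p - 1) (cutWord c (v ++ [d])) := by
  rw [cutWord_append, List.reverse_singleton, List.append_assoc]
  exact occursAt_sub_append.2
    ⟨occursAt_singleton.2 hl, occursAt_append.2 ⟨hw, occursAt_singleton.2 hr⟩⟩

theorem memXF.not_flanked_cutWord (hx : memXF x) (hw : OccursAt x p (cutWord c v)) :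
    ¬ (x (p - 1) = c ∧ x (p + (cutWord c v).length) = !c) := by
  rintro ⟨hl, hr⟩
  refine hx.not_occursAt_flanked_cutWord (p := p - 1) (c := c) (v := v) ?_
  rw [List.append_assoc]
  exact occursAt_sub_append.2
    ⟨occursAt_singleton.2 hl, occursAt_append.2 ⟨hw, occursAt_singleton.2 hr⟩⟩

theorem memXF.occursAt_run_after (hx : memXF x) (hw : OccursAt x p (cutWord c v))
    (hrun : OccursAt x (p - m) (List.replicate m c)) :
    OccursAt x (p + (cutWord c v).length) (List.replicate m c) := by
  induction m generalizing v p with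
  | zero => simp [OccursAt]
  | succ m ih =>
    rw [List.replicate_succ', occursAt_append, occursAt_singleton] at hrun
    have hl : x (p - 1) = c := by
      rw [← hrun.2, List.length_replicate]; congr 1; push_cast; ring
    have hr : x (p + (cutWord c v).length) = c := by
      by_contra hne
      exact hx.not_flanked_cutWord hw ⟨hl, Bool.eq_not.2 hne⟩
    have hrun' : OccursAt x (p - 1 - m) (List.replicate m c) := by
      convert hrun.1 using 1; push_cast; ring
    have hrest := ih (hw.cutWord_concat hl hr) hrun'
    rw [List.replicate_succ, ← List.singleton_append, occursAt_append, occursAt_singleton]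
    refine ⟨hr, ?_⟩
    convert hrest using 1
    rw [length_cutWord_append, List.length_singleton]; push_cast; ring

theorem memXF.occursAt_run_before (hx : memXF x) (hw : OccursAt x p (cutWord c v))
    (hrun : OccursAt x (p + (cutWord c v).length) (List.replicate m !c)) :
    OccursAt x (p - m) (List.replicate m !c) := by
  induction m generalizing v p with
  | zero => simp [OccursAt]
  | succ m ih =>
    rw [List.replicate_succ, ← List.singleton_append, occursAt_append, occursAt_singleton] at hrun
    have hl : x (p - 1) = !c :=
      Bool.eq_not.2 fun hc => hx.not_flanked_cutWord hw ⟨hc, hrun.1⟩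
    have hrun' : OccursAt x (p - 1 + (cutWord c (v ++ [!c])).length) (List.replicate m !c) := by
      convert hrun.2 using 1
      rw [length_cutWord_append, List.length_singleton]; push_cast; ring
    have hrest := ih (hw.cutWord_concat hl hrun.1) hrun'
    rw [List.replicate_succ', occursAt_append, occursAt_singleton]
    constructor
    · convert hrest using 1; push_cast; ring
    · rw [← hl, List.length_replicate]; congr 1; push_cast; ring

end CutWords

section PeriodicWords

variable {a n : ℕ}

theorem flatten_replicate_append_append {α : Type*} (u v : List α) (n : ℕ) :
    (List.replicate n (u ++ v)).flatten ++ u = u ++ (List.replicate n (v ++ u)).flatten := by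
  induction n with
  | zero => simp
  | succ n ih => simp [List.replicate_succ, ih]

/-- The word `0^m`, with `0 = false`. -/
abbrev zeros (m : ℕ) : List Bool := List.replicate m false

/-- The word `(10^a)^n`, which begins `wordA a n` and, with `a + 1` for `a`, `wordB a n`. -/
def oneZerosPow (a n : ℕ) : List Bool := (List.replicate n ([true] ++ zeros a)).flatten

/-- The word `(0^a 1)^n`, which ends `wordA a n` and, with `a + 1` for `a`, `wordB a n`. It is the
mirror word of `(10^a)^n`. -/
def zerosOnePow (a n : ℕ) : List Bool := (List.replicate n (zeros a ++ [true])).flatten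

theorem reverse_oneZerosPow : (oneZerosPow a n).reverse = zerosOnePow a n := by
  simp [oneZerosPow, zerosOnePow, List.reverse_flatten]

theorem reverse_zerosOnePow : (zerosOnePow a n).reverse = oneZerosPow a n := by
  rw [← reverse_oneZerosPow, List.reverse_reverse]

theorem oneZerosPow_append_one : oneZerosPow a n ++ [true] = [true] ++ zerosOnePow a n :=
  flatten_replicate_append_append [true] (zeros a) n

theorem zerosOnePow_append_zeros : zerosOnePow a n ++ zeros a = zeros a ++ oneZerosPow a n :=
  flatten_replicate_append_append (zeros a) [true] n

theorem zeros_append_one_append_zerosOnePow :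
    zeros a ++ [true] ++ zerosOnePow a n = zerosOnePow a n ++ zeros a ++ [true] := by
  rw [List.append_assoc, ← oneZerosPow_append_one, zerosOnePow_append_zeros, List.append_assoc]

end PeriodicWords

section Factorizations

variable (a n : ℕ)

theorem wordA_eq : wordA a n =
    oneZerosPow a n ++ [true] ++ zeros (a + 1) ++ [true] ++
      (zeros a ++ [true] ++ zerosOnePow a n) := by
  simp only [wordA, oneZerosPow, zerosOnePow, List.append_assoc]

theorem wordB_eq : wordB a n =
    oneZerosPow (a + 1) n ++ [true] ++ zeros a ++ [true] ++
      (zeros (a + 1) ++ [true] ++ zerosOnePow (a + 1) n) := by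
  simp only [wordB, oneZerosPow, zerosOnePow, List.append_assoc]

theorem wordA_eq_cutWord :
    wordA a n = cutWord false (zeros a ++ [true] ++ zerosOnePow a n) := by
  simp [wordA_eq, cutWord, reverse_zerosOnePow, List.replicate_succ']

theorem wordB_eq_cutWord :
    wordB a n = cutWord true (zeros a ++ [true] ++ zerosOnePow (a + 1) n) := by
  simp [wordB_eq, cutWord, reverse_zerosOnePow, List.replicate_succ]

theorem wordA_eq_cutWord_append : wordA a n =
    cutWord true (zerosOnePow a n) ++ zeros a ++ ([true] ++ zeros a ++ [true]) :=
  calc wordA a n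
    _ = oneZerosPow a n ++ [true] ++ zeros (a + 1) ++ [true] ++
          (zerosOnePow a n ++ zeros a ++ [true]) := by
      rw [wordA_eq, zeros_append_one_append_zerosOnePow]
    _ = oneZerosPow a n ++ [true, false] ++ (zeros a ++ [true] ++ zerosOnePow a n) ++
          zeros a ++ [true] := by
      simp [List.replicate_succ]
    _ = _ := by
      rw [zeros_append_one_append_zerosOnePow]
      simp [cutWord, reverse_zerosOnePow]

theorem wordA_eq_append_one_zeros_one : wordA a n =
    oneZerosPow a n ++ [true] ++ zeros (a + 1) ++ oneZerosPow a n ++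
      ([true] ++ zeros a ++ [true]) :=
  calc wordA a n
    _ = oneZerosPow a n ++ [true] ++ zeros (a + 1) ++ ([true] ++ zerosOnePow a n) ++
          (zeros a ++ [true]) := by
      rw [wordA_eq, zeros_append_one_append_zerosOnePow]
      simp only [List.append_assoc]
    _ = _ := by
      rw [← oneZerosPow_append_one]
      simp only [List.append_assoc]

theorem wordB_eq_append_zeros_append_cutWord : wordB a n =
    oneZerosPow (a + 1) n ++ [true] ++ zeros a ++ [true] ++ zerosOnePow (a + 1) n ++ zeros a ++
      cutWord false [] := by
  rw [wordB_eq, zeros_append_one_append_zerosOnePow]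
  simp [cutWord, List.replicate_succ']

theorem zeros_append_wordB_eq_flanked_cutWord : zeros (a + 2) ++ wordB a n =
    [false] ++ cutWord false (zeros a ++ oneZerosPow (a + 1) n) ++ [true] ++
      (zeros (a + 1) ++ [true]) :=
  calc zeros (a + 2) ++ wordB a n
    _ = [false] ++ (zeros (a + 1) ++ oneZerosPow (a + 1) n) ++ [true] ++ zeros a ++
          ([true] ++ zerosOnePow (a + 1) n) ++ (zeros (a + 1) ++ [true]) := by
      rw [wordB_eq, zeros_append_one_append_zerosOnePow]
      simp [List.replicate_succ (n := a + 1)]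
    _ = [false] ++ (zerosOnePow (a + 1) n ++ zeros (a + 1)) ++ [true] ++ zeros a ++
          (oneZerosPow (a + 1) n ++ [true]) ++ (zeros (a + 1) ++ [true]) := by
      rw [zerosOnePow_append_zeros, oneZerosPow_append_one]
    _ = _ := by
      simp [cutWord, reverse_oneZerosPow, List.replicate_succ']

end Factorizations

section Surroundings

variable {x : ℤ → Bool} {a n m : ℕ} {i : ℤ}

theorem memXF.zeros_before_wordA (hx : memXF x) (hw : OccursAt x i (wordA a n)) :
    OccursAt x (i - a) (zeros a) := by
  rw [wordA_eq_cutWord_append, occursAt_append, occursAt_append] at hw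
  exact hx.occursAt_run_before hw.1.1 hw.1.2

theorem memXF.zeros_after_wordA_of_before (hx : memXF x) (hw : OccursAt x i (wordA a n))
    (h : OccursAt x (i - m) (zeros m)) : OccursAt x (i + (wordA a n).length) (zeros m) := by
  rw [wordA_eq_cutWord] at hw ⊢
  exact hx.occursAt_run_after hw h

theorem memXF.not_zeros_after_wordA (hx : memXF x) (hw : OccursAt x i (wordA a n)) :
    ¬ OccursAt x (i + (wordA a n).length) (zeros (a + 2)) := by
  intro hzeros
  have hocc : OccursAt x i (wordA a n ++ zeros (a + 2)) := occursAt_append.2 ⟨hw, hzeros⟩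
  have hforbidden : [true] ++ zeros a ++ [true] ++ zeros (a + 2) =
      [true] ++ cutWord true (zeros a) ++ [!true] := by
    simp [cutWord, List.replicate_succ (n := a + 1), List.replicate_succ']
  rw [wordA_eq_append_one_zeros_one, List.append_assoc, hforbidden, occursAt_append] at hocc
  exact hx.not_occursAt_flanked_cutWord hocc.2

theorem memXF.zeros_after_wordB (hx : memXF x) (hw : OccursAt x i (wordB a n)) :
    OccursAt x (i + (wordB a n).length) (zeros a) := by
  rw [wordB_eq_append_zeros_append_cutWord] at hw ⊢
  obtain ⟨hprefix, hcut⟩ := occursAt_append.1 hw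
  have hrun := (occursAt_append.1 hprefix).2
  rw [List.length_append, Nat.cast_add, ← add_assoc]
  refine hx.occursAt_run_after hcut ?_
  rwa [List.length_append, List.length_replicate, Nat.cast_add, ← add_assoc, add_sub_cancel_right]

theorem memXF.zeros_before_wordB_of_after (hx : memXF x) (hw : OccursAt x i (wordB a n))
    (h : OccursAt x (i + (wordB a n).length) (zeros m)) : OccursAt x (i - m) (zeros m) := by
  rw [wordB_eq_cutWord] at hw h
  exact hx.occursAt_run_before hw h

theorem memXF.not_zeros_before_wordB (hx : memXF x) (hw : OccursAt x i (wordB a n)) :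
    ¬ OccursAt x (i - (a + 2 : ℕ)) (zeros (a + 2)) := by
  intro hzeros
  have hocc : OccursAt x (i - (zeros (a + 2)).length) (zeros (a + 2) ++ wordB a n) :=
    occursAt_sub_append.2 ⟨by simpa using hzeros, hw⟩
  rw [zeros_append_wordB_eq_flanked_cutWord, occursAt_append] at hocc
  exact hx.not_occursAt_flanked_cutWord hocc.1

end Surroundings

theorem stmt10 (x : ℤ → Bool) (hx : memXF x) (a n : ℕ) (ha : 1 ≤ a)
    (w : List Bool) (hw : w = wordA a n ∨ w = wordB a n)
    (i j : ℤ) (hij : j = i + w.length - 1)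
    (hblock : ∀ k : ℕ, k < w.length → x (i + k) = w.getD k false) :
    (∀ k : ℕ, 1 ≤ k → k ≤ a → x (i - k) = false) ∧
    (∀ k : ℕ, 1 ≤ k → k ≤ a → x (j + k) = false) ∧
    ¬ (∀ k : ℕ, 1 ≤ k → k ≤ a + 2 → x (i - k) = false) ∧
    ¬ (∀ k : ℕ, 1 ≤ k → k ≤ a + 2 → x (j + k) = false) := by
  have hocc : OccursAt x i w := hblock
  have hend : j + 1 = i + w.length := by omega
  simp only [← occursAt_sub_replicate, ← occursAt_add_one_replicate, hend]
  rcases hw with rfl | rfl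
  · have hbefore := hx.zeros_before_wordA hocc
    have hnot_after := hx.not_zeros_after_wordA hocc
    exact ⟨hbefore, hx.zeros_after_wordA_of_before hocc hbefore,
      fun h => hnot_after (hx.zeros_after_wordA_of_before hocc h), hnot_after⟩
  · have hafter := hx.zeros_after_wordB hocc
    have hnot_before := hx.not_zeros_before_wordB hocc
    exact ⟨hx.zeros_before_wordB_of_after hocc hafter, hafter, hnot_before,
      fun h => hnot_before (hx.zeros_before_wordB_of_after hocc h)⟩
end

section
/- If a finite, right-infinite, or bi-infinite word x over the alphabet 𝒜 = {0,1} is not balanced, then there exists a palindrome w ∈ 𝒜* (i.e. w equals its mirror word) such that both 0w0 and 1w1 are factors of x. -/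
/-! The factors of a word form a language closed under taking factors, and only this closure is
used. In such a language take a shortest pair of words `u`, `v` of equal length with at least two
more `1`s in `u` than in `v`. If both words are cut at the same place, neither pair of pieces can
have an excess of two, so every piece of `u` has exactly one `1` more than the matching piece of
`v`. Cutting at all places gives `u = 1p1` and `v = 0p0`. Finally `p` is a palindrome: a prefix
`s` and a suffix `t` of `p` of equal length contain equally many `1`s, as one sees by comparing
`1s` with `t0` and `t1` with `0s`. -/

/-- A factorial language: it contains every factor of each of its words. -/
def IsFactorial {α : Type*} (L : Language α) : Prop :=
  ∀ ⦃u v : List α⦄, u <:+: v → v ∈ L → u ∈ L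

/-- A balanced language: the common generalization of `BalancedL`, `BalancedN` and `BalancedZ`,
which are the cases where `L` is the set of factors of a word. -/
def IsBalancedLanguage (L : Language Bool) : Prop :=
  ∀ u v : List Bool, u ∈ L → v ∈ L → u.length = v.length →
    |(u.count true : ℤ) - (v.count true : ℤ)| ≤ 1

/-- A witness `(u, v)` that `L` is not balanced, ordered so that `u` is the word with more `1`s. -/
structure IsUnbalancedPair (L : Language Bool) (u v : List Bool) : Prop where
  left_mem : u ∈ L
  right_mem : v ∈ L
  length_eq : u.length = v.length
  count_add_two_le : v.count true + 2 ≤ u.count true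

/-- An unbalanced pair of words of `L` of the least possible length. -/
structure IsMinimalUnbalancedPair (L : Language Bool) (u v : List Bool) : Prop
    extends IsUnbalancedPair L u v where
  length_le : ∀ ⦃u' v' : List Bool⦄, IsUnbalancedPair L u' v' → u.length ≤ u'.length

theorem eq_of_count_true_take_eq {s t : List Bool} (hlen : s.length = t.length)
    (hcount : ∀ k ≤ s.length, (s.take k).count true = (t.take k).count true) : s = t := by
  induction s generalizing t with
  | nil => exact (List.length_eq_zero_iff.mp hlen.symm).symm
  | cons a s ih =>
    obtain _ | ⟨b, t⟩ := t
    · simp at hlen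
    have hab : a = b := by
      have := hcount 1 (by simp)
      cases a <;> cases b <;> simp_all
    subst hab
    refine congrArg (a :: ·) (ih (by simpa using hlen) fun k hk ↦ ?_)
    simpa [List.count_cons] using hcount (k + 1) (by simpa using hk)

theorem exists_eq_cons_append_singleton {α : Type*} {u : List α} (hu : 2 ≤ u.length) :
    ∃ a p b, u = a :: p ++ [b] := by
  obtain _ | ⟨a, s⟩ := u
  · simp at hu
  obtain rfl | ⟨p, b, rfl⟩ := s.eq_nil_or_concat'
  · simp at hu
  · exact ⟨a, p, b, rfl⟩

theorem exists_isUnbalancedPair {L : Language Bool} (h : ¬ IsBalancedLanguage L) :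
    ∃ u v, IsUnbalancedPair L u v := by
  simp only [IsBalancedLanguage, not_forall, not_le, lt_abs] at h
  obtain ⟨u, v, hu, hv, hlen, hcount | hcount⟩ := h
  · exact ⟨u, v, hu, hv, hlen, by omega⟩
  · exact ⟨v, u, hv, hu, hlen.symm, by omega⟩

theorem exists_isMinimalUnbalancedPair {L : Language Bool} (h : ¬ IsBalancedLanguage L) :
    ∃ u v, IsMinimalUnbalancedPair L u v := by
  obtain ⟨u₀, v₀, h₀⟩ := exists_isUnbalancedPair h
  obtain ⟨⟨u, v⟩, huv⟩ := exists_minimalFor_of_wellFoundedLT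
    (fun w : List Bool × List Bool ↦ IsUnbalancedPair L w.1 w.2) (·.1.length) ⟨(u₀, v₀), h₀⟩
  exact ⟨u, v, huv.prop, fun u' v' h' ↦ not_lt.mp (huv.not_lt (j := (u', v')) h')⟩

namespace IsMinimalUnbalancedPair

variable {L : Language Bool}

theorem count_true_le {u v u' v' : List Bool} (h : IsMinimalUnbalancedPair L u v)
    (hu' : u' ∈ L) (hv' : v' ∈ L) (hlen : u'.length = v'.length) (hlt : u'.length < u.length) :
    u'.count true ≤ v'.count true + 1 := by
  by_contra! hcount
  exact hlt.not_ge (h.length_le ⟨hu', hv', hlen, hcount⟩)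

theorem count_true_eq_of_append {u₁ u₂ v₁ v₂ : List Bool} (hL : IsFactorial L)
    (h : IsMinimalUnbalancedPair L (u₁ ++ u₂) (v₁ ++ v₂)) (hlen : u₁.length = v₁.length)
    (hu₁ : u₁ ≠ []) (hu₂ : u₂ ≠ []) :
    u₁.count true = v₁.count true + 1 ∧ u₂.count true = v₂.count true + 1 := by
  have hlen₂ : u₂.length = v₂.length := by simpa [hlen] using h.length_eq
  have hprefix : u₁.count true ≤ v₁.count true + 1 :=
    h.count_true_le (hL (u₁.prefix_append u₂).isInfix h.left_mem)
      (hL (v₁.prefix_append v₂).isInfix h.right_mem)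
      hlen (by simpa using List.length_pos_iff.mpr hu₂)
  have hsuffix : u₂.count true ≤ v₂.count true + 1 :=
    h.count_true_le (hL (u₁.suffix_append u₂).isInfix h.left_mem)
      (hL (v₁.suffix_append v₂).isInfix h.right_mem)
      hlen₂ (by simpa using List.length_pos_iff.mpr hu₁)
  have htotal := h.count_add_two_le
  simp only [List.count_append] at htotal
  omega

theorem exists_eq_true_cons_and_eq_false_cons {u v : List Bool} (hL : IsFactorial L)
    (h : IsMinimalUnbalancedPair L u v) :
    ∃ p q, u = true :: p ++ [true] ∧ v = false :: q ++ [false] := by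
  have hu : 2 ≤ u.length := by
    have := h.count_add_two_le
    have := u.count_le_length (a := true)
    omega
  obtain ⟨a, p, b, rfl⟩ := exists_eq_cons_append_singleton hu
  obtain ⟨c, q, d, rfl⟩ := exists_eq_cons_append_singleton (h.length_eq ▸ hu)
  have hlen : p.length = q.length := by simpa using h.length_eq
  have hfirst : [a].count true = [c].count true + 1 :=
    (count_true_eq_of_append (u₁ := [a]) (v₁ := [c]) hL h rfl (by simp) (by simp)).1
  have hlast : [b].count true = [d].count true + 1 :=
    (count_true_eq_of_append hL h (by simpa using hlen) (by simp) (by simp)).2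
  have letters_eq : ∀ a c : Bool, [a].count true = [c].count true + 1 → a = true ∧ c = false := by
    decide
  obtain ⟨rfl, rfl⟩ := letters_eq a c hfirst
  obtain ⟨rfl, rfl⟩ := letters_eq b d hlast
  exact ⟨p, q, rfl, rfl⟩

theorem interior_eq {p q : List Bool} (hL : IsFactorial L)
    (h : IsMinimalUnbalancedPair L (true :: p ++ [true]) (false :: q ++ [false])) : p = q := by
  have hlen : p.length = q.length := by simpa using h.length_eq
  refine eq_of_count_true_take_eq hlen fun k _ ↦ ?_
  have hsplit : IsMinimalUnbalancedPair L
      (true :: p.take k ++ (p.drop k ++ [true])) (false :: q.take k ++ (q.drop k ++ [false])) := by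
    simpa [← List.append_assoc] using h
  simpa using (count_true_eq_of_append hL hsplit (by simp [hlen]) (by simp) (by simp)).1

theorem interior_reverse_eq {p : List Bool} (hL : IsFactorial L)
    (h : IsMinimalUnbalancedPair L (true :: p ++ [true]) (false :: p ++ [false])) :
    p.reverse = p := by
  refine (eq_of_count_true_take_eq p.length_reverse.symm fun k hk ↦ ?_).symm
  rw [List.take_reverse, List.count_reverse]
  set s := p.take k
  set t := p.drop (p.length - k)
  have hs : s.length = k := by simpa [s] using hk
  have ht : t.length = k := by simpa [t] using Nat.sub_sub_self hk
  have prefix_mem {a : Bool} (ha : a :: p ++ [a] ∈ L) : a :: s ∈ L :=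
    hL ⟨[], p.drop k ++ [a], by simp [s, ← List.append_assoc]⟩ ha
  have suffix_mem {a : Bool} (ha : a :: p ++ [a] ∈ L) : t ++ [a] ∈ L :=
    hL ⟨a :: p.take (p.length - k), [], by simp [t, ← List.append_assoc]⟩ ha
  apply le_antisymm
  · simpa using h.count_true_le (prefix_mem h.left_mem) (suffix_mem h.right_mem)
      (by simp [hs, ht]) (by simpa [hs] using hk)
  · simpa using h.count_true_le (suffix_mem h.left_mem) (prefix_mem h.right_mem)
      (by simp [hs, ht]) (by simpa [ht] using hk)

end IsMinimalUnbalancedPair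

theorem isFactorial_setOf_infix {α : Type*} (w : List α) :
    IsFactorial ({u | u <:+: w} : Language α) :=
  fun _ _ huv hv ↦ huv.trans hv

theorem getD_append_append {α : Type*} (a u c : List α) (d : α) {k : ℕ} (hk : k < u.length) :
    (a ++ u ++ c).getD (a.length + k) d = u.getD k d := by
  rw [List.getD_append _ _ _ _ (by simpa using hk),
    List.getD_append_right _ _ _ _ (Nat.le_add_right _ _), Nat.add_sub_cancel_left]

/-- The index monoid `M` is `ℕ` for right-infinite and `ℤ` for bi-infinite words. -/
theorem isFactorial_setOf_occurs {M α : Type*} [AddMonoidWithOne M] (x : M → α) (d : α) :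
    IsFactorial ({u | ∃ i : M, ∀ k : ℕ, k < u.length → x (i + k) = u.getD k d} : Language α) := by
  rintro u _ ⟨a, c, rfl⟩ ⟨i, hi⟩
  refine ⟨i + a.length, fun k hk ↦ ?_⟩
  rw [← getD_append_append a u c d hk, ← hi _ (by simp only [List.length_append]; omega),
    Nat.cast_add, add_assoc]

theorem stmt13_general {L : Language Bool} (hL : IsFactorial L) (h : ¬ IsBalancedLanguage L) :
    ∃ p : List Bool, p.reverse = p ∧ [false] ++ p ++ [false] ∈ L ∧ [true] ++ p ++ [true] ∈ L := by
  obtain ⟨u, v, huv⟩ := exists_isMinimalUnbalancedPair h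
  obtain ⟨p, q, rfl, rfl⟩ := huv.exists_eq_true_cons_and_eq_false_cons hL
  obtain rfl := huv.interior_eq hL
  exact ⟨p, huv.interior_reverse_eq hL, huv.right_mem, huv.left_mem⟩

theorem stmt13 :
    (∀ w : List Bool, ¬ BalancedL w → ∃ p : List Bool, p.reverse = p ∧
      ([false] ++ p ++ [false]) <:+: w ∧ ([true] ++ p ++ [true]) <:+: w) ∧
    (∀ y : ℕ → Bool, ¬ BalancedN y → ∃ p : List Bool, p.reverse = p ∧
      IsFactorN ([false] ++ p ++ [false]) y ∧ IsFactorN ([true] ++ p ++ [true]) y) ∧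
    (∀ x : ℤ → Bool, ¬ BalancedZ x → ∃ p : List Bool, p.reverse = p ∧
      IsFactorZ ([false] ++ p ++ [false]) x ∧ IsFactorZ ([true] ++ p ++ [true]) x) := by
  exact ⟨fun w h ↦ stmt13_general (isFactorial_setOf_infix w) h,
    fun y h ↦ stmt13_general (isFactorial_setOf_occurs y false) h,
    fun x h ↦ stmt13_general (isFactorial_setOf_occurs x false) h⟩
end

section
/- X_F is exactly the set of balanced bi-infinite words over 𝒜 = {0,1}: a bi-infinite word x ∈ 𝒜^ℤ has no factor in F if and only if x is balanced. -/
/-!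
If `x` is unbalanced, take factors of minimal length `n`, at positions `i` and `j`, whose numbers
of `1`s differ by two, with `|j - i|` minimal for this `n`. After complementing the letters we may
assume that `i < j` and that the factor at `j` is the heavier one. Minimality of `n` makes the
factor at `i` a palindrome; minimality of `j - i` gives `x i = x (j - 1) = 0`,
`x (i + n) = x (j - 1 + n) = 1` and makes `x` locally `n`-periodic strictly between `i` and `j - 1`.

Reflect `x` about the boundary `01` between positions `i + n - 1` and `i + n`. Before position
`j - 1 + n` is reached, the two sides agree within distance `n` by palindromicity and periodicity.
Farther out, a first disagreement cannot have `1` on the left, for then the reflection of a window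
between `i` and `j` would be a heavy window closer to `i`; nor can it have `0` on the left, as that
would be a factor `0v01ṽ1`. Hence the agreement extends up to position `j - 1 + n`, where it does
break with `0` on the left, so `0v01ṽ1` occurs after all.
-/

section Window

variable {α : Type*} (x : ℤ → α) (i : ℤ)

/-- The factor `x i, x (i + 1), …, x (i + n - 1)` of length `n` of the bi-infinite word `x`. -/
def window (n : ℕ) : List α :=
  (List.range n).map fun k : ℕ => x (i + k)

@[simp]
theorem length_window (n : ℕ) : (window x i n).length = n := by
  simp [window]

@[simp]
theorem window_one : window x i 1 = [x i] := by
  simp [window]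

theorem window_add (m n : ℕ) : window x i (m + n) = window x i m ++ window x (i + m) n := by
  simp [window, List.range_add, Function.comp_def, add_assoc]

theorem map_window {β : Type*} (f : α → β) (n : ℕ) :
    (window x i n).map f = window (f ∘ x) i n := by
  simp [window]

variable {x i}

theorem window_eq_reverse_window {j : ℤ} {n : ℕ}
    (h : ∀ k : ℕ, k < n → x (j + k) = x (i + n - 1 - k)) :
    window x j n = (window x i n).reverse := by
  refine List.ext_getElem (by simp) fun k hk _ => ?_
  rw [length_window] at hk
  simp only [window, List.getElem_map, List.getElem_range, List.getElem_reverse, List.length_map,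
    List.length_range, h k hk]
  congr 1
  omega

end Window

section Factor

variable {x : ℤ → Bool} {u w : List Bool}

theorem isFactorZ_iff_exists_window : IsFactorZ u x ↔ ∃ i, window x i u.length = u := by
  refine exists_congr fun i => ⟨fun h => ?_, fun h k hk => ?_⟩
  · refine List.ext_getElem (by simp) fun k _ hk => ?_
    simp [window, h k hk, hk]
  · rw [← h]
    simp [window, hk]

theorem isFactorZ_window (x : ℤ → Bool) (i : ℤ) (n : ℕ) : IsFactorZ (window x i n) x :=
  isFactorZ_iff_exists_window.2 ⟨i, by rw [length_window]⟩

theorem IsFactorZ.mono (hw : IsFactorZ w x) (huw : u <:+: w) : IsFactorZ u x := by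
  obtain ⟨s, t, rfl⟩ := huw
  obtain ⟨i, hi⟩ := isFactorZ_iff_exists_window.1 hw
  refine isFactorZ_iff_exists_window.2 ⟨i + s.length, ?_⟩
  rw [List.length_append, List.length_append, window_add, window_add] at hi
  exact (List.append_inj (List.append_inj hi (by simp)).1 (by simp)).2

theorem IsFactorZ.map_not (hu : IsFactorZ u x) : IsFactorZ (u.map not) (not ∘ x) := by
  obtain ⟨i, hi⟩ := isFactorZ_iff_exists_window.1 hu
  rw [← hi, map_window]
  exact isFactorZ_window _ _ _

end Factor

section Ones

theorem injective_boolToNat : Function.Injective Bool.toNat := by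
  decide

/-- The number of occurrences of `1` in the factor of length `n` of `x` at position `i`. -/
def ones (x : ℤ → Bool) (i : ℤ) (n : ℕ) : ℕ :=
  (window x i n).count true

variable (x : ℤ → Bool) (i : ℤ)

theorem ones_add (m n : ℕ) : ones x i (m + n) = ones x i m + ones x (i + m) n := by
  simp [ones, window_add]

theorem ones_one : ones x i 1 = (x i).toNat := by
  cases h : x i <;> simp [ones, h]

theorem ones_succ (n : ℕ) : ones x i (n + 1) = ones x i n + (x (i + n)).toNat := by
  rw [ones_add, ones_one]

theorem ones_succ' (n : ℕ) : ones x i (n + 1) = (x i).toNat + ones x (i + 1) n := by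
  rw [add_comm n, ones_add, ones_one, Nat.cast_one]

theorem ones_slide (n : ℕ) :
    ones x i n + (x (i + n)).toNat = (x i).toNat + ones x (i + 1) n := by
  rw [← ones_succ, ones_succ']

theorem ones_not_comp (n : ℕ) : ones (not ∘ x) i n + ones x i n = n := by
  have h := List.count_not_add_count (window x i n) true
  have hcount := List.count_map_of_injective (window x i n) not Bool.involutive_not.injective false
  rw [length_window, Bool.not_true] at h
  rw [ones, ones, ← map_window, ← Bool.not_false, hcount, Bool.not_false, h]

variable {x i}

theorem ones_eq_of_reflect {j : ℤ} {n : ℕ}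
    (h : ∀ k : ℕ, k < n → x (j + k) = x (i + n - 1 - k)) : ones x j n = ones x i n := by
  rw [ones, ones, window_eq_reverse_window h, List.count_reverse]

end Ones

/-- All factors of length `n` of `x` have the same number of `1`s up to one. -/
def BalancedAt (x : ℤ → Bool) (n : ℕ) : Prop :=
  ∀ i j : ℤ, ones x j n ≤ ones x i n + 1

theorem balancedZ_iff_forall_balancedAt {x : ℤ → Bool} :
    BalancedZ x ↔ ∀ n, BalancedAt x n := by
  constructor
  · intro h n i j
    have := h _ _ (isFactorZ_window x i n) (isFactorZ_window x j n) (by simp)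
    rw [abs_le] at this
    rw [ones, ones]
    omega
  · intro h u v hu hv huv
    obtain ⟨i, hi⟩ := isFactorZ_iff_exists_window.1 hu
    obtain ⟨j, hj⟩ := isFactorZ_iff_exists_window.1 hv
    have hij := h u.length i j
    have hji := h u.length j i
    rw [ones, ones, hi, huv, hj] at hij hji
    rw [abs_le]
    omega

theorem BalancedAt.not_comp {x : ℤ → Bool} {n : ℕ} (h : BalancedAt x n) :
    BalancedAt (not ∘ x) n := fun i j => by
  have := h j i
  have := ones_not_comp x i n
  have := ones_not_comp x j n
  omega

section Mirror

/-- The letters of `x` at distance `s` to the left and to the right of the boundary between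
positions `c` and `c + 1` agree for `0 < s < t`; the letters next to the boundary have `s = 0` and
are not compared. -/
def MirroredUpTo (x : ℤ → Bool) (c : ℤ) (t : ℕ) : Prop :=
  ∀ s : ℕ, 0 < s → s < t → x (c - s) = x (c + 1 + s)

variable {x : ℤ → Bool} {c : ℤ} {t : ℕ}

theorem MirroredUpTo.exists_isFactorZ_forbidden1 (h : MirroredUpTo x c t) (ht : 0 < t)
    (hc : x c = false) (hc' : x (c + 1) = true) (hl : x (c - t) = false)
    (hr : x (c + 1 + t) = true) : ∃ v, IsFactorZ (forbidden1 v) x := by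
  obtain ⟨m, rfl⟩ : ∃ m, t = m + 1 := ⟨t - 1, by omega⟩
  push_cast at hl hr
  have hmirror : window x (c + 2) m = (window x (c - m) m).reverse :=
    window_eq_reverse_window fun k hk => by
      have := h (k + 1) (by omega) (by omega)
      push_cast at this
      convert this.symm using 2 <;> ring
  have hwindow : window x (c - (m + 1)) (1 + m + 1 + 1 + m + 1) =
      forbidden1 (window x (c - m) m) := by
    simp only [window_add, window_one, forbidden1, ← hmirror]
    push_cast
    ring_nf at hl hr hc' ⊢
    simp [hl, hr, hc, hc']
  exact ⟨_, hwindow ▸ isFactorZ_window _ _ _⟩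

theorem MirroredUpTo.ones_reflect {n : ℕ} (h : MirroredUpTo x c t) (hn : 0 < n) (hnt : n ≤ t) :
    ones x (c - t) n + (x (c + 1 + t)).toNat =
      ones x (c + 2 + t - n) n + (x (c - t)).toNat := by
  obtain ⟨m, rfl⟩ : ∃ m, n = m + 1 := ⟨n - 1, by omega⟩
  have hreflect : ones x (c - t + 1) m = ones x (c + 1 + t - m) m :=
    ones_eq_of_reflect fun k hk => by
      convert h (t - 1 - k) (by omega) (by omega) using 2 <;> omega
  rw [ones_succ', ones_succ, hreflect]
  have hleft : c + 2 + (t : ℤ) - (m + 1 : ℕ) = c + 1 + t - m := by push_cast; ring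
  rw [hleft, sub_add_cancel]
  ring

end Mirror

/-- Factors of length `n` at `i` and `j` violate balance, the one at `j` being heavier, and no
shorter factors violate it. -/
structure MinimalImbalance (x : ℤ → Bool) (n : ℕ) (i j : ℤ) : Prop where
  shorter_balanced : ∀ m < n, BalancedAt x m
  imbalance : ones x i n + 2 ≤ ones x j n

namespace MinimalImbalance

variable {x : ℤ → Bool} {n : ℕ} {i j : ℤ}

theorem length_pos (h : MinimalImbalance x n i j) : 0 < n := by
  by_contra hn
  obtain rfl : n = 0 := by omega
  simpa [ones, window] using h.imbalance

theorem ones_prefix_suffix (h : MinimalImbalance x n i j) {k l : ℕ} (hk : 0 < k) (hl : 0 < l)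
    (hkl : k + l = n) :
    ones x j k = ones x i k + 1 ∧ ones x (j + k) l = ones x (i + k) l + 1 := by
  have himb := h.imbalance
  have hinitial := h.shorter_balanced k (by omega) i j
  have hfinal := h.shorter_balanced l (by omega) (i + k) (j + k)
  rw [← hkl, ones_add, ones_add] at himb
  omega

theorem ones_prefix_eq_ones_suffix (h : MinimalImbalance x n i j) {k l : ℕ} (hkl : k + l = n) :
    ones x i k = ones x (i + l) k := by
  rcases k.eq_zero_or_pos with rfl | hk
  · rfl
  rcases l.eq_zero_or_pos with rfl | hl
  · simp
  have hinitial := (h.ones_prefix_suffix hk hl hkl).1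
  have hfinal := (h.ones_prefix_suffix hl hk (by omega)).2
  have hle := h.shorter_balanced k (by omega) (i + l) j
  have hge := h.shorter_balanced k (by omega) i (j + l)
  omega

theorem palindrome (h : MinimalImbalance x n i j) {t : ℕ} (ht : t < n) :
    x (i + n - 1 - t) = x (i + t) := by
  obtain ⟨s, rfl⟩ : ∃ s, n = s + t + 1 := ⟨n - 1 - t, by omega⟩
  have hlong := h.ones_prefix_eq_ones_suffix (k := s + 1) (l := t) (by omega)
  have hshort := h.ones_prefix_eq_ones_suffix (k := s) (l := t + 1) (by omega)
  rw [ones_succ, ones_succ'] at hlong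
  push_cast [← add_assoc] at hshort
  rw [show i + (s + t + 1 : ℕ) - 1 - t = i + s by push_cast; ring]
  exact injective_boolToNat (by omega)

end MinimalImbalance

/-- A minimal imbalance with the light factor to the left of the heavy one, at the smallest distance
possible for factors of length `n`. -/
structure ClosestImbalance (x : ℤ → Bool) (n : ℕ) (i j : ℤ) : Prop
    extends MinimalImbalance x n i j where
  lt : i < j
  closest : ∀ i' j' : ℤ, |j' - i'| < j - i → ones x j' n ≤ ones x i' n + 1

namespace ClosestImbalance

variable {x : ℤ → Bool} {n : ℕ} {i j : ℤ}

theorem add_one_lt (h : ClosestImbalance x n i j) : i + 1 < j := by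
  by_contra hij
  obtain rfl : j = i + 1 := by have := h.lt; omega
  have := h.imbalance
  have := ones_slide x i n
  have := Bool.toNat_le (x (i + n))
  omega

theorem ones_between (h : ClosestImbalance x n i j) {k : ℤ} (hik : i < k) (hkj : k < j) :
    ones x k n = ones x i n + 1 := by
  have := h.imbalance
  have := h.closest i k (by rw [abs_lt]; omega)
  have := h.closest k j (by rw [abs_lt]; omega)
  omega

theorem letters_left (h : ClosestImbalance x n i j) : x i = false ∧ x (i + n) = true := by
  have hslide := ones_slide x i n
  rw [h.ones_between (lt_add_one i) h.add_one_lt] at hslide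
  have hle := Bool.toNat_le (x (i + n))
  exact ⟨Bool.toNat_eq_zero.1 (by omega), Bool.toNat_eq_one.1 (by omega)⟩

theorem letters_right (h : ClosestImbalance x n i j) :
    x (j - 1) = false ∧ x (j - 1 + n) = true := by
  have himb := h.imbalance
  have hlt := h.add_one_lt
  have hslide := ones_slide x (j - 1) n
  rw [h.ones_between (by omega) (by omega), sub_add_cancel] at hslide
  have hle := Bool.toNat_le (x (j - 1 + n))
  exact ⟨Bool.toNat_eq_zero.1 (by omega), Bool.toNat_eq_one.1 (by omega)⟩

theorem periodic (h : ClosestImbalance x n i j) {k : ℤ} (hik : i < k) (hkj : k < j - 1) :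
    x (k + n) = x k := by
  have hslide := ones_slide x k n
  rw [h.ones_between hik (by omega), h.ones_between (by omega : i < k + 1) (by omega)] at hslide
  exact injective_boolToNat (by omega)

theorem exists_isFactorZ_of_mirroredUpTo (h : ClosestImbalance x n i j) {t : ℕ} (ht : 0 < t)
    (hmirror : MirroredUpTo x (i + n - 1) t) (hl : x (i + n - 1 - t) = false)
    (hr : x (i + n + t) = true) : ∃ v, IsFactorZ (forbidden1 v) x := by
  have hlast : x (i + n - 1) = false := by
    simpa [h.letters_left.1] using h.palindrome h.length_pos
  apply hmirror.exists_isFactorZ_forbidden1 ht hlast _ hl <;> rw [sub_add_cancel]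
  exacts [hr, h.letters_left.2]

theorem ones_add_reflect_le (h : ClosestImbalance x n i j) {t : ℕ} (hnt : n ≤ t) (htj : i + t < j)
    (hmirror : MirroredUpTo x (i + n - 1) t) :
    ones x (i + t + 1) n + (x (i + n - 1 - t)).toNat ≤
      ones x i n + 1 + (x (i + n + t)).toNat := by
  have hclosest := h.closest i (i + n - 1 - t) (by have := h.length_pos; rw [abs_lt]; omega)
  have hreflect := hmirror.ones_reflect h.length_pos hnt
  rw [sub_add_cancel, show i + n - 1 + 2 + t - n = i + t + 1 by ring] at hreflect
  omega

theorem mirroredUpTo (h : ClosestImbalance x n i j)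
    (hx : ∀ v, ¬ IsFactorZ (forbidden1 v) x) {t : ℕ} (htj : i + t < j) :
    MirroredUpTo x (i + n - 1) t := by
  induction t with
  | zero => exact fun s _ hs => absurd hs s.not_lt_zero
  | succ t ih =>
    push_cast [← add_assoc] at htj
    have hmirror := ih (by omega)
    intro s hs hst
    rcases (Nat.lt_succ_iff.1 hst).lt_or_eq with hst' | rfl
    · exact hmirror s hs hst'
    rw [sub_add_cancel]
    rcases lt_or_ge s n with hsn | hns
    · rw [h.palindrome hsn, ← h.periodic (by omega : i < i + s) (by omega),
        add_right_comm]
    · have hle := h.ones_add_reflect_le hns (by omega) hmirror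
      rw [h.ones_between (by omega) htj] at hle
      by_contra hne
      have hforbidden : x (i + n - 1 - s) = false ∧ x (i + n + s) = true := by
        cases hl : x (i + n - 1 - s) <;> cases hr : x (i + n + s) <;> simp_all
      obtain ⟨v, hv⟩ := h.exists_isFactorZ_of_mirroredUpTo hs hmirror hforbidden.1 hforbidden.2
      exact hx v hv

theorem exists_isFactorZ_forbidden1 (h : ClosestImbalance x n i j) :
    ∃ v, IsFactorZ (forbidden1 v) x := by
  by_contra! hx
  obtain ⟨t, ht⟩ := Int.eq_ofNat_of_zero_le (by have := h.lt; omega : 0 ≤ j - 1 - i)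
  have hlt := h.add_one_lt
  have hmirror := h.mirroredUpTo hx (t := t) (by omega)
  have hright : x (i + n + t) = true := by
    rw [← h.letters_right.2]; congr 1; omega
  have hleft : x (i + n - 1 - t) = false := by
    rcases lt_or_ge t n with htn | hnt
    · rw [h.palindrome htn, ← h.letters_right.1]; congr 1; omega
    · have hle := h.ones_add_reflect_le hnt (by omega) hmirror
      have himb := h.imbalance
      rw [show i + t + 1 = j by omega, hright, Bool.toNat_true] at hle
      exact Bool.toNat_eq_zero.1 (by omega)
  obtain ⟨v, hv⟩ := h.exists_isFactorZ_of_mirroredUpTo (by omega) hmirror hleft hright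
  exact hx v hv

end ClosestImbalance

theorem exists_imbalance_min_dist {x : ℤ → Bool} {n : ℕ} (h : ¬ BalancedAt x n) :
    ∃ i j : ℤ, ones x i n + 2 ≤ ones x j n ∧
      ∀ i' j' : ℤ, |j' - i'| < |j - i| → ones x j' n ≤ ones x i' n + 1 := by
  have hex : ∃ p : ℤ × ℤ, ones x p.1 n + 2 ≤ ones x p.2 n := by
    simp only [BalancedAt, not_forall, not_le] at h
    obtain ⟨i, j, hij⟩ := h
    exact ⟨(i, j), hij⟩
  obtain ⟨⟨i, j⟩, himb, hmin⟩ :=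
    exists_minimalFor_of_wellFoundedLT _ (fun p : ℤ × ℤ => (p.2 - p.1).natAbs) hex
  refine ⟨i, j, himb, fun i' j' hlt => ?_⟩
  by_contra! hheavy
  rw [Int.abs_eq_natAbs, Int.abs_eq_natAbs, Nat.cast_lt] at hlt
  exact hlt.not_ge (hmin (j := (i', j')) hheavy hlt.le)

theorem exists_closestImbalance {x : ℤ → Bool} (h : ∃ n, ¬ BalancedAt x n) :
    ∃ n i j, ClosestImbalance x n i j ∨ ClosestImbalance (not ∘ x) n i j := by
  classical
  have hshort : ∀ m < Nat.find h, BalancedAt x m := fun m hm => not_not.1 (Nat.find_min h hm)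
  obtain ⟨i, j, himb, hclosest⟩ := exists_imbalance_min_dist (Nat.find_spec h)
  rcases lt_trichotomy i j with hij | rfl | hji
  · rw [abs_of_pos (sub_pos.2 hij)] at hclosest
    exact ⟨_, i, j, .inl ⟨⟨hshort, himb⟩, hij, hclosest⟩⟩
  · omega
  · rw [abs_sub_comm, abs_of_pos (sub_pos.2 hji)] at hclosest
    have hones := fun k => ones_not_comp x k (Nat.find h)
    refine ⟨_, j, i, .inr ⟨⟨fun m hm => (hshort m hm).not_comp, ?_⟩, hji, fun i' j' hlt => ?_⟩⟩
    · have := hones i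
      have := hones j
      omega
    · have := hclosest j' i' (by rwa [abs_sub_comm])
      have := hones i'
      have := hones j'
      omega

theorem not_isFactorZ_forbidden1_not_comp {x : ℤ → Bool} (hx : memXF x) (v : List Bool) :
    ¬ IsFactorZ (forbidden1 v) (not ∘ x) := fun hv => by
  have hcomp := hv.map_not
  rw [← Function.comp_assoc, Bool.involutive_not.comp_self, Function.id_comp] at hcomp
  exact (hx (v.map not)).2 (by simpa [forbidden1, forbidden2] using hcomp)

theorem memXF.balancedZ {x : ℤ → Bool} (hx : memXF x) : BalancedZ x := by
  rw [balancedZ_iff_forall_balancedAt]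
  by_contra! hunbalanced
  obtain ⟨n, i, j, h | h⟩ := exists_closestImbalance hunbalanced
  · obtain ⟨v, hv⟩ := h.exists_isFactorZ_forbidden1
    exact (hx v).1 hv
  · obtain ⟨v, hv⟩ := h.exists_isFactorZ_forbidden1
    exact not_isFactorZ_forbidden1_not_comp hx v hv

theorem BalancedZ.not_isFactorZ_append {x : ℤ → Bool} (hx : BalancedZ x) {u v : List Bool}
    (hlength : u.length = v.length) (hcount : 1 < |(u.count true : ℤ) - (v.count true : ℤ)|) :
    ¬ IsFactorZ (u ++ v) x := fun huv =>
  hcount.not_ge <| hx u v (huv.mono (List.prefix_append u v).isInfix)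
    (huv.mono (List.suffix_append u v).isInfix) hlength

theorem BalancedZ.memXF {x : ℤ → Bool} (hx : BalancedZ x) : memXF x := fun v => by
  constructor
  · simpa [forbidden1] using hx.not_isFactorZ_append (u := [false] ++ v ++ [false])
      (v := [true] ++ v.reverse ++ [true]) (by simp) (by simp [add_assoc])
  · simpa [forbidden2] using hx.not_isFactorZ_append (u := [true] ++ v ++ [true])
      (v := [false] ++ v.reverse ++ [false]) (by simp) (by simp [add_assoc])

theorem stmt14 (x : ℤ → Bool) : memXF x ↔ BalancedZ x :=
  ⟨memXF.balancedZ, BalancedZ.memXF⟩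
end
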